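/- arXiv:1208.0744 — 5 statements merged into one kernel-verified Lean document; each statement's English description precedes it below -/
import Mathlib

section
/- Every Δ-tree G admits a degenerate drawing with at most three distinct edge-lengths; that is, there exists an injective map f from the vertex set of G to the complex plane ℂ such that the set of distances {|f(u) − f(w)| : uw an edge of G} has cardinality at most 3. -/
/-!
The triangles of a Δ-tree are glued in pairs into rhombi with unit sides and angle `arg z`, where
`z` is a transcendental number on the unit circle.  All sides of rhombi are then drawn as
vectors `± z ^ k`, and the edge shared by the two triangles of a rhombus is one of its diagonals,
a vector `z ^ k * (± 1 ± z)`.  So only the lengths `1`, `‖1 + z‖` and `‖1 - z‖` occur, and the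
vertices are placed at values at `z` of integer polynomials.  It remains to choose the signs
so that distinct vertices receive distinct polynomials.

A rhombus erected on a side `a b` with `b - a = ε X ^ k` has the further corners
`a + σ X ^ (k + 1)` and `b + σ X ^ (k + 1)`.  The sign `σ` and a second sign `τ` form the state of
the side `a b`.  The side opposite to `a b` has the state `(σ, -τ)`, the side at `a` has
`(τ, 1)`, and the side at `b` has `(-τ, 1)`.  Everything that can ever be built on `a b` splits into
a left half, displaced from `a` by multiples of `X ^ (k + 1)`, and a right half, displaced likewise
from `b`.  Both are indexed by the type `Half`, and `Half.val` gives the displacement, divided by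
`X ^ (k + 1)`.

Injectivity is proved by reading off lowest coefficients.  The constant coefficient of
`Half.val h _ σ _` is `σ` times the natural number `h.height`, so two halves of opposite sign `σ`
sharing a corner can meet only at height `0`, where the same situation recurs one degree higher
with opposite signs again (`val_ne_val`).  The alternation of `τ` along a stack of rhombi ensures
that the lateral halves below and above a corner of the stack have opposite signs, whence
`val_injective`.

The combinatorial part is an induction along the construction of the Δ-tree.  Every external
edge owns a set of polynomials reserved for the vertices to be attached behind it (`Slot`);
these sets are pairwise disjoint, and attaching a vertex splits one of them (`Slot.step`).
-/

/-- A Δ-tree, presented as a vertex set `V`, an edge set `E` and a set `ext` of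
currently-external edges.  It is built recursively: start with a triangle, all three
of whose edges are external; at each step pick an external edge `s(u,w)`, add a new
vertex `z` adjacent to exactly `u` and `w`, unmark `s(u,w)` and mark `s(u,z)` and
`s(z,w)` as external. -/
inductive IsDeltaTreeAux : Finset ℕ → Finset (Sym2 ℕ) → Finset (Sym2 ℕ) → Prop
  | triangle (u v w : ℕ) (huv : u ≠ v) (huw : u ≠ w) (hvw : v ≠ w) :
      IsDeltaTreeAux {u, v, w} {s(u, v), s(u, w), s(v, w)} {s(u, v), s(u, w), s(v, w)}
  | extend (V : Finset ℕ) (E ext : Finset (Sym2 ℕ)) (u w z : ℕ)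
      (h : IsDeltaTreeAux V E ext) (huw : s(u, w) ∈ ext) (hz : z ∉ V) :
      IsDeltaTreeAux (insert z V) (insert s(u, z) (insert s(z, w) E))
        (insert s(u, z) (insert s(z, w) (ext.erase s(u, w))))

/-- A Δ-tree: a vertex set together with an edge set arising from the recursive
construction, for some set of external edges. -/
def IsDeltaTree (V : Finset ℕ) (E : Finset (Sym2 ℕ)) : Prop :=
  ∃ ext, IsDeltaTreeAux V E ext

/-- The length of the image of an (unordered) edge under a map `f : ℕ → ℂ`. -/
noncomputable def edgeLength (f : ℕ → ℂ) : Sym2 ℕ → ℝ :=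
  Sym2.lift ⟨fun u w => dist (f u) (f w), fun u w => dist_comm (f u) (f w)⟩

open Polynomial

/-! ### Positions in a half region -/

/-- The points that can be built on one half of a side, relative to the corner `c` of this half.
`tip` is the corner following `c` in the rhombus erected on the side, `up` passes to the same half
of the opposite side of that rhombus, and `near` and `far` pass to the halves, at `c` and at the
tip respectively, of the side joining `c` to the tip. -/
inductive Half : Type
  | tip : Half
  | up : Half → Half
  | near : Half → Half
  | far : Half → Half

/-- The sign with which rhombi are erected on the lateral side in the left (`true`) or right
(`false`) half, for a side whose second sign is `τ`. -/
def sideSign (d : Bool) (τ : ℤˣ) : ℤˣ := if d then τ else -τ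

namespace Half

/-- The displacement of a point from the corner of its half (left for `d = true`), for a
side with state `(σ, τ)`.  For a side `± X ^ k` the true displacement is `X ^ (k + 1)` times this
polynomial. -/
noncomputable def val : Half → Bool → ℤˣ → ℤˣ → ℤ[X]
  | tip, _, σ, _ => C (σ : ℤ)
  | up h, d, σ, τ => C (σ : ℤ) + val h d σ (-τ)
  | near h, d, _, τ => X * val h d (sideSign d τ) 1
  | far h, d, σ, τ => C (σ : ℤ) + X * val h (!d) (sideSign d τ) 1

/-- The number of rhombi stacked on the side before the point leaves the stack, counted up to the
corner from which it does so. -/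
def height : Half → ℕ
  | tip => 1
  | up h => h.height + 1
  | near _ => 0
  | far _ => 1

lemma val_coeff_zero (h : Half) (d : Bool) (σ τ : ℤˣ) :
    (h.val d σ τ).coeff 0 = (σ : ℤ) * h.height := by
  induction h generalizing τ with
  | tip => simp [val, height]
  | up h ih => simp [val, height, ih]; ring
  | near h _ => simp [val, height]
  | far h _ => simp [val, height]

lemma height_eq_zero {h : Half} (hh : h.height = 0) : ∃ h', h = near h' := by
  cases h <;> simp_all [height]

lemma height_eq_of_val_eq {h h' : Half} {d d' : Bool} {σ τ τ' : ℤˣ}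
    (e : h.val d σ τ = h'.val d' σ τ') : h.height = h'.height := by
  have e0 := congrArg (fun p : ℤ[X] => p.coeff 0) e
  simpa [val_coeff_zero] using e0

lemma val_ne_zero (h : Half) (d : Bool) (σ τ : ℤˣ) : h.val d σ τ ≠ 0 := by
  induction h generalizing d σ τ with
  | near h ih => exact mul_ne_zero X_ne_zero (ih _ _ _)
  | _ =>
    intro e
    have e0 := congrArg (fun p : ℤ[X] => p.coeff 0) e
    simp only [val_coeff_zero, coeff_zero, mul_eq_zero, Units.ne_zero, false_or, height] at e0
    norm_cast at e0

/-- Halves of opposite kind and opposite sign sharing their corner have no point in common. -/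
lemma val_ne_val (h h' : Half) (d : Bool) (σ : ℤˣ) :
    h.val d σ 1 ≠ h'.val (!d) (-σ) 1 := by
  induction h generalizing h' σ with
  | near h ih =>
    intro e
    have e0 := congrArg (fun p : ℤ[X] => p.coeff 0) e
    simp only [val_coeff_zero] at e0
    obtain ⟨h', rfl⟩ : ∃ x, h' = near x := height_eq_zero (by simpa [height] using e0)
    refine ih h' (sideSign d 1) ?_
    have : sideSign (!d) 1 = -sideSign d 1 := by cases d <;> simp [sideSign]
    simpa [val, this] using e
  | _ =>
    intro e
    have e0 := congrArg (fun p : ℤ[X] => p.coeff 0) e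
    simp only [val_coeff_zero, height, Units.val_neg, neg_mul, ← mul_neg] at e0
    have e1 := mul_left_cancel₀ (Units.ne_zero σ) e0
    push_cast at e1
    omega

/-- The point `up h` and the point `far h'` of the same half are distinct: at worst both are based
at the tip, where the two halves they lie in have opposite signs. -/
lemma val_up_ne_val_far (h h' : Half) (d : Bool) (σ τ : ℤˣ) :
    (up h).val d σ τ ≠ (far h').val d σ τ := by
  intro e
  simp only [val, add_right_inj] at e
  have e0 := congrArg (fun p : ℤ[X] => p.coeff 0) e
  simp only [val_coeff_zero] at e0
  obtain ⟨h, rfl⟩ : ∃ x, h = near x := height_eq_zero (by simpa using e0)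
  refine val_ne_val h h' d (sideSign d (-τ)) ?_
  have : sideSign d τ = -sideSign d (-τ) := by cases d <;> simp [sideSign]
  simpa [val, this] using e

lemma val_injective (d : Bool) (σ τ : ℤˣ) :
    Function.Injective (fun h : Half => h.val d σ τ) := by
  intro h
  induction h generalizing d σ τ with
  | tip =>
    rintro (_ | h' | h' | h') e
    · rfl
    · simp [val, val_ne_zero] at e
    · simpa [height] using height_eq_of_val_eq e
    · simp [val, val_ne_zero] at e
  | up h ih =>
    rintro (_ | h' | h' | h') e
    · simp [val, val_ne_zero] at e
    · simp only [val, add_right_inj] at e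
      rw [ih _ _ _ e]
    · simpa [height] using height_eq_of_val_eq e
    · exact absurd e (val_up_ne_val_far _ _ _ _ _)
  | near h ih =>
    rintro (_ | h' | h' | h') e
    · simpa [height] using height_eq_of_val_eq e
    · simpa [height] using height_eq_of_val_eq e
    · rw [ih d (sideSign d τ) 1 (a₂ := h') (by simpa [val] using e)]
    · simpa [height] using height_eq_of_val_eq e
  | far h ih =>
    rintro (_ | h' | h' | h') e
    · simp [val, val_ne_zero] at e
    · exact absurd e.symm (val_up_ne_val_far _ _ _ _ _)
    · simpa [height] using height_eq_of_val_eq e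
    · rw [ih (!d) (sideSign d τ) 1 (a₂ := h') (by simpa [val] using e)]

end Half

/-! ### Slots -/

/-- The position of a point in the left (`true`) or right (`false`) half of the region behind the
side `a b` of level `k` and state `(σ, τ)`. -/
noncomputable def pos (a b : ℤ[X]) (k : ℕ) (σ τ : ℤˣ) (t : Bool × Half) : ℤ[X] :=
  (if t.1 then a else b) + X ^ (k + 1) * t.2.val t.1 σ τ

/-- `a b` is a side of a rhombus, and `S` is the set of all positions behind it. -/
def FullSlot (a b : ℤ[X]) (S : Set ℤ[X]) : Prop :=
  ∃ (k : ℕ) (ε σ τ : ℤˣ), b = a + C (ε : ℤ) * X ^ k ∧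
    Function.Injective (pos a b k σ τ) ∧ S = Set.range (pos a b k σ τ)

/-- `b x` is a diagonal of the rhombus erected on a side `a b`, where `x` is the corner following
`a`, and `S` is the set of all positions that are reserved for the triangle on the other side of
this diagonal and for what is attached behind that triangle. -/
def HalfSlot (b x : ℤ[X]) (S : Set ℤ[X]) : Prop :=
  ∃ (a : ℤ[X]) (k : ℕ) (ε σ τ : ℤˣ), b = a + C (ε : ℤ) * X ^ k ∧
    x = a + C (σ : ℤ) * X ^ (k + 1) ∧
    Function.Injective (pos a b k σ τ) ∧
    S = pos a b k σ τ '' {t | t.1 = true → ∃ h, t.2 = Half.up h}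

/-- The edge `a b` can be extended, and `S` is the set of positions reserved behind it. -/
def Slot (a b : ℤ[X]) (S : Set ℤ[X]) : Prop :=
  (FullSlot a b S ∨ FullSlot b a S) ∨ (HalfSlot a b S ∨ HalfSlot b a S)

lemma Slot.symm {a b : ℤ[X]} {S : Set ℤ[X]} (h : Slot a b S) : Slot b a S := by
  unfold Slot at *; tauto

/-- The polynomials allowed as edge vectors: sides and diagonals of rhombi. -/
def IsEdgeVec (p : ℤ[X]) : Prop :=
  ∃ (k : ℕ) (ε σ : ℤˣ), p = C (ε : ℤ) * X ^ k ∨ p = X ^ k * (C (ε : ℤ) + C (σ : ℤ) * X)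

lemma IsEdgeVec.neg {p : ℤ[X]} (h : IsEdgeVec p) : IsEdgeVec (-p) := by
  obtain ⟨k, ε, σ, h | h⟩ := h
  · exact ⟨k, -ε, σ, Or.inl (by simp [h])⟩
  · exact ⟨k, -ε, -σ, Or.inr (by simp [h]; ring)⟩

lemma IsEdgeVec.sub_comm {p q : ℤ[X]} (h : IsEdgeVec (p - q)) : IsEdgeVec (q - p) := by
  simpa using h.neg

/-- A triangle with third vertex `x` can be attached to the edge `a b`, taking `x` from the
positions `S` reserved behind `a b` and splitting the remaining ones between `a x` and `x b`. -/
def Extends (a b : ℤ[X]) (S : Set ℤ[X]) : Prop :=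
  ∃ x ∈ S, ∃ S₁ S₂ : Set ℤ[X], S₁ ⊆ S ∧ S₂ ⊆ S ∧ x ∉ S₁ ∧ x ∉ S₂ ∧ Disjoint S₁ S₂ ∧
    Slot a x S₁ ∧ Slot x b S₂ ∧ IsEdgeVec (x - a) ∧ IsEdgeVec (x - b)

lemma Extends.symm {a b : ℤ[X]} {S : Set ℤ[X]} (h : Extends a b S) : Extends b a S := by
  obtain ⟨x, hx, S₁, S₂, h1, h2, h3, h4, h5, h6, h7, h8, h9⟩ := h
  exact ⟨x, hx, S₂, S₁, h2, h1, h4, h3, h5.symm, h7.symm, h6.symm, h9, h8⟩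

/-- The lateral region in the half `c`, as a part of the whole region. -/
def lateral (c : Bool) (t : Bool × Half) : Bool × Half :=
  (c, if t.1 = c then t.2.near else t.2.far)

/-- The region behind the opposite side of the rhombus, as a part of the whole region. -/
def above (t : Bool × Half) : Bool × Half := (t.1, t.2.up)

lemma lateral_injective (c : Bool) : Function.Injective (lateral c) := by
  rintro ⟨d, h⟩ ⟨d', h'⟩ e
  cases c <;> cases d <;> cases d' <;> simp_all [lateral]

lemma above_injective : Function.Injective above := by
  rintro ⟨d, h⟩ ⟨d', h'⟩ e
  simpa [above] using e

lemma pos_lateral_left (a b : ℤ[X]) (k : ℕ) (σ τ : ℤˣ) :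
    pos a (a + C (σ : ℤ) * X ^ (k + 1)) (k + 1) τ 1 = pos a b k σ τ ∘ lateral true := by
  funext ⟨d, h⟩
  cases d <;> simp [pos, lateral, Half.val, sideSign] <;> ring

lemma pos_lateral_right (a b : ℤ[X]) (k : ℕ) (σ τ : ℤˣ) :
    pos (b + C (σ : ℤ) * X ^ (k + 1)) b (k + 1) (-τ) 1 = pos a b k σ τ ∘ lateral false := by
  funext ⟨d, h⟩
  cases d <;> simp [pos, lateral, Half.val, sideSign] <;> ring

lemma pos_above (a b : ℤ[X]) (k : ℕ) (σ τ : ℤˣ) :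
    pos (a + C (σ : ℤ) * X ^ (k + 1)) (b + C (σ : ℤ) * X ^ (k + 1)) k σ (-τ) =
      pos a b k σ τ ∘ above := by
  funext ⟨d, h⟩
  cases d <;> simp [pos, above, Half.val] <;> ring

lemma FullSlot.extends {a b : ℤ[X]} {S : Set ℤ[X]} (h : FullSlot a b S) : Extends a b S := by
  obtain ⟨k, ε, σ, τ, hb, hinj, rfl⟩ := h
  have hx : a + C (σ : ℤ) * X ^ (k + 1) = pos a b k σ τ (true, Half.tip) := by
    simp [pos, Half.val]; ring
  refine ⟨a + C (σ : ℤ) * X ^ (k + 1), ⟨_, hx.symm⟩,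
    pos a b k σ τ '' Set.range (lateral true),
    pos a b k σ τ '' {t | t.1 = true → ∃ h, t.2 = Half.up h},
    Set.image_subset_range _ _, Set.image_subset_range _ _, ?_, ?_, ?_,
    Or.inl (Or.inl ⟨k + 1, σ, τ, 1, rfl, ?_, ?_⟩),
    Or.inr (Or.inr ⟨a, k, ε, σ, τ, hb, rfl, hinj, rfl⟩), ⟨k + 1, σ, 1, Or.inl (by ring)⟩,
    ⟨k, -ε, σ, Or.inr (by rw [hb]; simp; ring)⟩⟩
  · rw [hx, hinj.mem_set_image]
    rintro ⟨⟨d, h⟩, e⟩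
    cases d <;> simp [lateral] at e
  · rw [hx, hinj.mem_set_image]
    simp
  · rw [Set.disjoint_image_iff hinj, Set.disjoint_left]
    rintro _ ⟨⟨d, h⟩, rfl⟩ e
    cases d <;> simp [lateral] at e
  · rw [pos_lateral_left a b]
    exact hinj.comp (lateral_injective _)
  · rw [pos_lateral_left a b, Set.range_comp]

lemma HalfSlot.extends {a b : ℤ[X]} {S : Set ℤ[X]} (h : HalfSlot b a S) : Extends a b S := by
  obtain ⟨a₀, k, ε, σ, τ, hb, rfl, hinj, rfl⟩ := h
  have hy : b + C (σ : ℤ) * X ^ (k + 1) = pos a₀ b k σ τ (false, Half.tip) := by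
    simp [pos, Half.val]; ring
  refine ⟨b + C (σ : ℤ) * X ^ (k + 1), ?_,
    pos a₀ b k σ τ '' Set.range above,
    pos a₀ b k σ τ '' Set.range (lateral false),
    Set.image_mono ?_, Set.image_mono ?_, ?_, ?_, ?_,
    Or.inl (Or.inl ⟨k, ε, σ, -τ, by rw [hb]; ring, ?_, ?_⟩),
    Or.inl (Or.inl ⟨k + 1, -σ, -τ, 1, by simp, ?_, ?_⟩),
    ⟨k, ε, 1, Or.inl (by rw [hb]; ring)⟩, ⟨k + 1, σ, 1, Or.inl (by ring)⟩⟩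
  · rw [hy]
    exact Set.mem_image_of_mem _ (by simp)
  · rintro _ ⟨⟨d, h⟩, rfl⟩
    simp [above]
  · rintro _ ⟨⟨d, h⟩, rfl⟩
    simp [lateral]
  · rw [hy, hinj.mem_set_image]
    rintro ⟨⟨d, h⟩, e⟩
    simp [above] at e
  · rw [hy, hinj.mem_set_image]
    rintro ⟨⟨d, h⟩, e⟩
    cases d <;> simp [lateral] at e
  · rw [Set.disjoint_image_iff hinj, Set.disjoint_left]
    rintro _ ⟨⟨d, h⟩, rfl⟩ ⟨⟨d', h'⟩, e⟩
    cases d <;> cases d' <;> simp [lateral, above] at e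
  · rw [pos_above]
    exact hinj.comp above_injective
  · rw [pos_above, Set.range_comp]
  · rw [pos_lateral_right a₀ b]
    exact hinj.comp (lateral_injective _)
  · rw [pos_lateral_right a₀ b, Set.range_comp]

lemma Slot.step {a b : ℤ[X]} {S : Set ℤ[X]} (h : Slot a b S) : Extends a b S := by
  rcases h with (h | h) | (h | h)
  · exact h.extends
  · exact h.extends.symm
  · exact h.extends.symm
  · exact h.extends

/-! ### The two sides of the initial edge -/

lemma root_injective (σ : ℤˣ) :
    Function.Injective (fun t : Bool × Half => pos 0 1 0 σ 1 t) := by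
  rintro ⟨d, h⟩ ⟨d', h'⟩ e
  have e0 := congrArg (fun p : ℤ[X] => p.coeff 0) e
  cases d <;> cases d' <;> simp [pos] at e e0 ⊢ <;> exact Half.val_injective _ _ _ e

lemma root_injective' (σ : ℤˣ) :
    Function.Injective (fun t : Bool × Half => pos 1 0 0 σ 1 t) := by
  rintro ⟨d, h⟩ ⟨d', h'⟩ e
  have e0 := congrArg (fun p : ℤ[X] => p.coeff 0) e
  cases d <;> cases d' <;> simp [pos] at e e0 ⊢ <;> exact Half.val_injective _ _ _ e

/-- The regions on the two sides of the edge from `0` to `1` can be filled simultaneously. -/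
lemma exists_root : ∃ S T : Set ℤ[X], Slot 0 1 S ∧ Slot 0 1 T ∧ Disjoint S T ∧
    0 ∉ S ∧ 1 ∉ S ∧ 0 ∉ T ∧ 1 ∉ T := by
  refine ⟨Set.range (pos 0 1 0 1 1), Set.range (pos 1 0 0 (-1) 1),
    Or.inl (Or.inl ⟨0, 1, 1, 1, by simp, root_injective 1, rfl⟩),
    Or.inl (Or.inr ⟨0, -1, -1, 1, by simp, root_injective' (-1), rfl⟩), ?_, ?_, ?_, ?_, ?_⟩
  · rw [Set.disjoint_left]
    rintro _ ⟨⟨d, h⟩, rfl⟩ ⟨⟨d', h'⟩, e⟩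
    have e0 := congrArg (fun p : ℤ[X] => p.coeff 0) e
    cases d <;> cases d' <;> simp [pos] at e e0
    · exact Half.val_ne_val h h' false 1 e.symm
    · exact Half.val_ne_val h h' true 1 e.symm
  all_goals
    rintro ⟨⟨d, h⟩, e⟩
    have e0 := congrArg (fun p : ℤ[X] => p.coeff 0) e
    cases d <;> simp [pos, Half.val_ne_zero, coeff_one] at e e0

/-! ### Drawing a Δ-tree with polynomials -/

/-- A drawing of the current Δ-tree by polynomials, with pairwise disjoint sets of free positions
reserved behind the external edges. -/
structure IsDrawing (V : Finset ℕ) (E ext : Finset (Sym2 ℕ)) (g : ℕ → ℤ[X])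
    (F : Sym2 ℕ → Set ℤ[X]) : Prop where
  inj : Set.InjOn g ↑V
  mem : ∀ u w, s(u, w) ∈ E → u ∈ V ∧ w ∈ V ∧ u ≠ w
  sub : ext ⊆ E
  vec : ∀ u w, s(u, w) ∈ E → IsEdgeVec (g u - g w)
  slot : ∀ u w, s(u, w) ∈ ext → Slot (g u) (g w) (F s(u, w))
  free : ∀ e ∈ ext, ∀ v ∈ V, g v ∉ F e
  disj : ∀ e ∈ ext, ∀ e' ∈ ext, e ≠ e' → Disjoint (F e) (F e')

/-- A symmetric property of the ends of an unordered edge may be checked for one order. -/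
lemma forall_of_eq_mk {P : ℕ → ℕ → Prop} (hP : ∀ u w, P u w → P w u) {a b u w : ℕ}
    (e : s(u, w) = s(a, b)) (h : P a b) : P u w := by
  rcases Sym2.eq_iff.1 e with ⟨rfl, rfl⟩ | ⟨rfl, rfl⟩
  · exact h
  · exact hP _ _ h

lemma exists_isDrawing {V : Finset ℕ} {E ext : Finset (Sym2 ℕ)} (h : IsDeltaTreeAux V E ext) :
    ∃ g F, IsDrawing V E ext g F := by
  classical
  induction h with
  | triangle u v w huv huw hvw =>
    obtain ⟨S, T, hS, hT, hST, hS0, hS1, hT0, hT1⟩ := exists_root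
    obtain ⟨x, hx, S₁, S₂, h1, h2, h3, h4, h5, h6, h7, h8, h9⟩ := hS.step
    have hx0 : x ≠ 0 := fun e => hS0 (e ▸ hx)
    have hx1 : x ≠ 1 := fun e => hS1 (e ▸ hx)
    have hxT : x ∉ T := Set.disjoint_left.1 hST hx
    let g : ℕ → ℤ[X] := fun n => if n = u then 0 else if n = v then 1 else x
    have gu : g u = 0 := by simp [g]
    have gv : g v = 1 := by simp [g, huv.symm]
    have gw : g w = x := by simp [g, huw.symm, hvw.symm]
    let F : Sym2 ℕ → Set ℤ[X] := fun e =>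
      if e = s(u, v) then T else if e = s(u, w) then S₁ else S₂
    have n1 : s(u, w) ≠ s(u, v) := by simp [hvw.symm, huv]
    have n2 : s(v, w) ≠ s(u, v) := by simp [huv.symm, huw.symm]
    have n3 : s(v, w) ≠ s(u, w) := by simp [huv.symm, hvw]
    have F1 : F s(u, v) = T := by simp [F]
    have F2 : F s(u, w) = S₁ := by simp only [F, if_neg n1, if_true]
    have F3 : F s(v, w) = S₂ := by simp only [F, if_neg n2, if_neg n3]
    refine ⟨g, F, ?_, ?_, subset_rfl, ?_, ?_, ?_, ?_⟩
    · intro a ha b hb e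
      simp only [Finset.coe_insert, Finset.coe_singleton, Set.mem_insert_iff,
        Set.mem_singleton_iff] at ha hb
      rcases ha with rfl | rfl | rfl <;> rcases hb with rfl | rfl | rfl <;>
        first
        | rfl
        | (rw [gu, gv] at e; exact absurd e zero_ne_one)
        | (rw [gu, gv] at e; exact absurd e one_ne_zero)
        | (rw [gu, gw] at e; exact absurd e hx0)
        | (rw [gu, gw] at e; exact absurd e.symm hx0)
        | (rw [gv, gw] at e; exact absurd e hx1)
        | (rw [gv, gw] at e; exact absurd e.symm hx1)
    · intro a b hab
      simp only [Finset.mem_insert, Finset.mem_singleton] at hab ⊢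
      rcases hab with e | e | e <;> rcases Sym2.eq_iff.1 e with ⟨rfl, rfl⟩ | ⟨rfl, rfl⟩ <;>
        simp_all [eq_comm]
    · intro a b hab
      simp only [Finset.mem_insert, Finset.mem_singleton] at hab
      have hP : ∀ a b, IsEdgeVec (g a - g b) → IsEdgeVec (g b - g a) := fun _ _ => .sub_comm
      rcases hab with e | e | e
      · exact forall_of_eq_mk hP e (by rw [gu, gv]; exact ⟨0, -1, 1, Or.inl (by simp)⟩)
      · exact forall_of_eq_mk hP e (by rw [gu, gw]; exact h8.sub_comm)
      · exact forall_of_eq_mk hP e (by rw [gv, gw]; exact h9.sub_comm)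
    · intro a b hab
      simp only [Finset.mem_insert, Finset.mem_singleton] at hab
      have hP : ∀ a b, Slot (g a) (g b) (F s(a, b)) → Slot (g b) (g a) (F s(b, a)) :=
        fun a b h => by rw [Sym2.eq_swap]; exact h.symm
      rcases hab with e | e | e
      · exact forall_of_eq_mk hP e (by rwa [gu, gv, F1])
      · exact forall_of_eq_mk hP e (by rwa [gu, gw, F2])
      · exact forall_of_eq_mk hP e (by rw [gv, gw, F3]; exact h7.symm)
    · intro e he a ha
      simp only [Finset.mem_insert, Finset.mem_singleton] at he ha
      have := fun h => hS0 (h1 h)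
      have := fun h => hS0 (h2 h)
      have := fun h => hS1 (h1 h)
      have := fun h => hS1 (h2 h)
      rcases he with rfl | rfl | rfl <;> rcases ha with rfl | rfl | rfl <;>
        simp only [F1, F2, F3, gu, gv, gw] <;> assumption
    · intro e he e' he' hne
      simp only [Finset.mem_insert, Finset.mem_singleton] at he he'
      have d1 := hST.mono_left h1
      have d2 := hST.mono_left h2
      have := d1.symm
      have := d2.symm
      have := h5.symm
      rcases he with rfl | rfl | rfl <;> rcases he' with rfl | rfl | rfl <;>
        first
        | exact absurd rfl hne
        | (simp only [F1, F2, F3]; assumption)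
  | extend V E ext u w z _ huw hz ih =>
    obtain ⟨g, F, hD⟩ := ih
    obtain ⟨x, hx, S₁, S₂, h1, h2, h3, h4, h5, h6, h7, h8, h9⟩ := (hD.slot u w huw).step
    obtain ⟨hu, hw, hne⟩ := hD.mem u w (hD.sub huw)
    have hzu : u ≠ z := fun e => hz (e ▸ hu)
    have hzw : w ≠ z := fun e => hz (e ▸ hw)
    have hxV : ∀ v ∈ V, g v ≠ x := fun v hv e => hD.free _ huw v hv (e ▸ hx)
    have hEu : ∀ a, s(a, z) ∉ E := fun a h => hz (hD.mem _ _ h).2.1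
    have hEu' : ∀ a, s(z, a) ∉ E := fun a h => hz (hD.mem _ _ h).1
    let g' : ℕ → ℤ[X] := Function.update g z x
    have gz : g' z = x := by simp [g']
    have gV : ∀ v ∈ V, g' v = g v := fun v hv =>
      Function.update_of_ne (fun e => hz (by rwa [e] at hv)) _ _
    let F' : Sym2 ℕ → Set ℤ[X] := fun e =>
      if e = s(u, z) then S₁ else if e = s(z, w) then S₂ else F e
    have n1 : s(z, w) ≠ s(u, z) := by simp [hzu.symm, hzw, hne.symm]
    have F1 : F' s(u, z) = S₁ := by simp [F']
    have F2 : F' s(z, w) = S₂ := by simp only [F', if_neg n1, if_true]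
    have F3 : ∀ e ∈ ext, F' e = F e := fun e he => by
      have m1 : e ≠ s(u, z) := fun h => hEu u (hD.sub (h ▸ he))
      have m2 : e ≠ s(z, w) := fun h => hEu' w (hD.sub (h ▸ he))
      simp only [F', if_neg m1, if_neg m2]
    refine ⟨g', F', ?_, ?_, ?_, ?_, ?_, ?_, ?_⟩
    · intro a ha b hb e
      simp only [Finset.coe_insert, Set.mem_insert_iff, Finset.mem_coe] at ha hb
      rcases ha with rfl | ha <;> rcases hb with rfl | hb
      · rfl
      · rw [gz, gV b hb] at e
        exact absurd e.symm (hxV b hb)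
      · rw [gz, gV a ha] at e
        exact absurd e (hxV a ha)
      · rw [gV a ha, gV b hb] at e
        exact hD.inj ha hb e
    · intro a b hab
      simp only [Finset.mem_insert] at hab ⊢
      rcases hab with e | e | e
      · rcases Sym2.eq_iff.1 e with ⟨rfl, rfl⟩ | ⟨rfl, rfl⟩ <;> simp_all [eq_comm]
      · rcases Sym2.eq_iff.1 e with ⟨rfl, rfl⟩ | ⟨rfl, rfl⟩ <;> simp_all [eq_comm]
      · obtain ⟨p, q, r⟩ := hD.mem _ _ e
        exact ⟨Or.inr p, Or.inr q, r⟩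
    · exact Finset.insert_subset_insert _ (Finset.insert_subset_insert _
        ((Finset.erase_subset _ _).trans hD.sub))
    · intro a b hab
      simp only [Finset.mem_insert] at hab
      have hP : ∀ a b, IsEdgeVec (g' a - g' b) → IsEdgeVec (g' b - g' a) :=
        fun _ _ => .sub_comm
      rcases hab with e | e | e
      · exact forall_of_eq_mk hP e (by rw [gz, gV u hu]; exact h8.sub_comm)
      · exact forall_of_eq_mk hP e (by rwa [gz, gV w hw])
      · obtain ⟨p, q, r⟩ := hD.mem _ _ e
        rw [gV a p, gV b q]
        exact hD.vec a b e
    · intro a b hab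
      simp only [Finset.mem_insert] at hab
      have hP : ∀ a b, Slot (g' a) (g' b) (F' s(a, b)) → Slot (g' b) (g' a) (F' s(b, a)) :=
        fun a b h => by rw [Sym2.eq_swap]; exact h.symm
      rcases hab with e | e | e
      · exact forall_of_eq_mk hP e (by rwa [gz, gV u hu, F1])
      · exact forall_of_eq_mk hP e (by rwa [gz, gV w hw, F2])
      · have e' := Finset.mem_of_mem_erase e
        obtain ⟨p, q, r⟩ := hD.mem _ _ (hD.sub e')
        rw [gV a p, gV b q, F3 _ e']
        exact hD.slot a b e'
    · intro e he a ha
      simp only [Finset.mem_insert] at he ha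
      have key : ∀ v ∈ V, g v ∉ F s(u, w) := hD.free _ huw
      rcases he with rfl | rfl | he
      · rw [F1]
        rcases ha with rfl | ha
        · rwa [gz]
        · rw [gV a ha]
          exact fun h => key a ha (h1 h)
      · rw [F2]
        rcases ha with rfl | ha
        · rwa [gz]
        · rw [gV a ha]
          exact fun h => key a ha (h2 h)
      · obtain ⟨hn, he⟩ := Finset.mem_erase.1 he
        rw [F3 e he]
        rcases ha with rfl | ha
        · rw [gz]
          exact Set.disjoint_left.1 (hD.disj _ huw e he hn.symm) hx
        · rw [gV a ha]
          exact hD.free e he a ha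
    · have old : ∀ e ∈ ext.erase s(u, w), Disjoint (F s(u, w)) (F' e) := fun e he => by
        obtain ⟨hn, he⟩ := Finset.mem_erase.1 he
        rw [F3 e he]
        exact hD.disj _ huw e he hn.symm
      intro e he e' he' hne'
      simp only [Finset.mem_insert] at he he'
      rcases he with rfl | rfl | he <;> rcases he' with rfl | rfl | he'
      · exact absurd rfl hne'
      · rwa [F1, F2]
      · rw [F1]
        exact (old _ he').mono_left h1
      · rw [F1, F2]
        exact h5.symm
      · exact absurd rfl hne'
      · rw [F2]
        exact (old _ he').mono_left h2
      · rw [F1]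
        exact ((old _ he).mono_left h1).symm
      · rw [F2]
        exact ((old _ he).mono_left h2).symm
      · have m := Finset.mem_of_mem_erase he
        have m' := Finset.mem_of_mem_erase he'
        rw [F3 _ m, F3 _ m']
        exact hD.disj _ m _ m' hne'

/-! ### Evaluation at a transcendental point of the unit circle -/

lemma exists_transcendental_norm_one : ∃ z : ℂ, ‖z‖ = 1 ∧ Transcendental ℤ z := by
  by_contra! hcon
  have hsub : Metric.sphere (0 : ℂ) 1 ⊆ {z : ℂ | IsAlgebraic ℤ z} := fun z hz => by
    have := hcon z (by simpa using hz)
    simpa [Transcendental] using this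
  have hc : (Metric.sphere (0 : ℂ) 1).Countable := (Algebraic.countable ℤ ℂ).mono hsub
  -- The real part maps the circle onto `[-1, 1]`, which is uncountable.
  have hI : Set.Icc (-1 : ℝ) 1 ⊆ Complex.re '' Metric.sphere (0 : ℂ) 1 := fun t ht => by
    refine ⟨⟨t, Real.sqrt (1 - t ^ 2)⟩, ?_, rfl⟩
    have h0 : 0 ≤ 1 - t ^ 2 := by nlinarith [ht.1, ht.2]
    have : ‖(⟨t, Real.sqrt (1 - t ^ 2)⟩ : ℂ)‖ ^ 2 = 1 := by
      rw [Complex.sq_norm, Complex.normSq_mk, Real.mul_self_sqrt h0]; ring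
    rw [mem_sphere_zero_iff_norm]
    exact (pow_eq_one_iff_of_nonneg (norm_nonneg _) two_ne_zero).1 this
  have := (hc.image Complex.re).mono hI
  rw [← Cardinal.le_aleph0_iff_set_countable, Cardinal.mk_Icc_real (by norm_num)] at this
  exact absurd this (not_le.2 Cardinal.aleph0_lt_continuum)

lemma IsEdgeVec.norm_aeval {p : ℤ[X]} (h : IsEdgeVec p) {z : ℂ} (hz : ‖z‖ = 1) :
    ‖aeval z p‖ = 1 ∨ ‖aeval z p‖ = ‖1 + z‖ ∨ ‖aeval z p‖ = ‖1 - z‖ := by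
  obtain ⟨k, ε, σ, rfl | rfl⟩ := h
  · left
    rcases Int.units_eq_one_or ε with rfl | rfl <;> simp [hz]
  · right
    rcases Int.units_eq_one_or ε with rfl | rfl <;> rcases Int.units_eq_one_or σ with rfl | rfl
    · left; simp [hz]
    · right; simp [hz, sub_eq_add_neg]
    · right; simp [hz]; rw [← norm_neg]; congr 1; ring
    · left; simp [hz]; rw [← norm_neg]; congr 1; ring

/-- Every Δ-tree admits a degenerate drawing (an injective map of its vertices into ℂ)
with at most three distinct edge-lengths. -/
theorem deltaTree_degenerate_drawing_three_lengths
    (V : Finset ℕ) (E : Finset (Sym2 ℕ)) (hG : IsDeltaTree V E) :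
    ∃ f : ℕ → ℂ, Set.InjOn f ↑V ∧ (E.image (edgeLength f)).card ≤ 3 := by
  obtain ⟨ext, h⟩ := hG
  obtain ⟨g, F, hD⟩ := exists_isDrawing h
  obtain ⟨z, hz, htr⟩ := exists_transcendental_norm_one
  refine ⟨fun n => aeval z (g n), ?_, ?_⟩
  · intro a ha b hb e
    exact hD.inj ha hb (transcendental_iff_injective.1 htr e)
  · refine (Finset.card_le_card (t := {1, ‖1 + z‖, ‖1 - z‖}) ?_).trans Finset.card_le_three
    intro r hr
    obtain ⟨e, he, rfl⟩ := Finset.mem_image.1 hr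
    induction e using Sym2.ind with
    | _ u w =>
      have := (hD.vec u w he).norm_aeval hz
      simpa [edgeLength, dist_eq_norm] using this
end

section
/- For almost every triple (a, b, c) ∈ (0,1)³ (with respect to Lebesgue measure on ℝ³), every subgraph of every Δ-tree admits a degenerate drawing all of whose edge-lengths lie in the set {a, b, c}. Equivalently, the set of triples (a,b,c) ∈ (0,1)³ for which some subgraph of some Δ-tree has no injective map f of its vertices into ℂ with |f(u) − f(w)| ∈ {a,b,c} for every edge uw, has Lebesgue measure zero. -/
open MeasureTheory
open Polynomial hiding C

/-! ### Words and their base points -/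

/-- The three ways of moving from an edge `(P, m)` to another edge of the rhombus erected over it,
see the module comment. -/
inductive Letter
  | A | B | C

open Letter

/-- The base point of the edge reached from `(0, 1)` along a word, starting with bit `s`; the two
rhombus angles are represented by `c false` and `c true`. -/
def wordPoint {R : Type*} [CommRing R] (c : Bool → R) : Bool → List Letter → R
  | _, [] => 0
  | s, A :: w => c s * wordPoint c s w
  | s, B :: w => c s + wordPoint c (!s) w
  | s, C :: w => 1 + c s * wordPoint c s w

/-- The direction `m` of the edge `(P, m)` reached from `(0, 1)` along a word. -/
def wordDir {R : Type*} [CommRing R] (c : Bool → R) : Bool → List Letter → R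
  | _, [] => 1
  | s, A :: w => c s * wordDir c s w
  | s, B :: w => wordDir c (!s) w
  | s, C :: w => c s * wordDir c s w

/-- The bit after reading a word. -/
def wordBit : Bool → List Letter → Bool
  | s, [] => s
  | s, A :: w => wordBit s w
  | s, B :: w => wordBit (!s) w
  | s, C :: w => wordBit s w

section Words

variable {R : Type*} [CommRing R] (c : Bool → R)

lemma wordPoint_append_A (s : Bool) (w : List Letter) :
    wordPoint c s (w ++ [A]) = wordPoint c s w := by
  induction w generalizing s with
  | nil => simp [wordPoint]
  | cons l w ih => cases l <;> simp [wordPoint, ih]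

lemma wordPoint_append_B (s : Bool) (w : List Letter) :
    wordPoint c s (w ++ [B]) = wordPoint c s w + wordDir c s w * c (wordBit s w) := by
  induction w generalizing s with
  | nil => simp [wordPoint, wordDir, wordBit]
  | cons l w ih => cases l <;> simp [wordPoint, wordDir, wordBit, ih] <;> ring

lemma wordPoint_append_C (s : Bool) (w : List Letter) :
    wordPoint c s (w ++ [C]) = wordPoint c s w + wordDir c s w := by
  induction w generalizing s with
  | nil => simp [wordPoint, wordDir]
  | cons l w ih => cases l <;> simp [wordPoint, wordDir, ih] <;> ring

lemma wordDir_append_A (s : Bool) (w : List Letter) :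
    wordDir c s (w ++ [A]) = wordDir c s w * c (wordBit s w) := by
  induction w generalizing s with
  | nil => simp [wordDir, wordBit]
  | cons l w ih => cases l <;> simp [wordDir, wordBit, ih] <;> ring

lemma wordDir_append_B (s : Bool) (w : List Letter) :
    wordDir c s (w ++ [B]) = wordDir c s w := by
  induction w generalizing s with
  | nil => simp [wordDir]
  | cons l w ih => cases l <;> simp [wordDir, ih]

lemma wordDir_append_C (s : Bool) (w : List Letter) :
    wordDir c s (w ++ [C]) = wordDir c s w * c (wordBit s w) := by
  induction w generalizing s with
  | nil => simp [wordDir, wordBit]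
  | cons l w ih => cases l <;> simp [wordDir, wordBit, ih] <;> ring

lemma map_wordPoint {S : Type*} [CommRing S] (φ : R →+* S) (s : Bool) (w : List Letter) :
    φ (wordPoint c s w) = wordPoint (fun i => φ (c i)) s w := by
  induction w generalizing s with
  | nil => simp [wordPoint]
  | cons l w ih => cases l <;> simp [wordPoint, ih]

lemma norm_wordDir (c : Bool → ℂ) (hc : ∀ i, ‖c i‖ = 1) (s : Bool) (w : List Letter) :
    ‖wordDir c s w‖ = 1 := by
  induction w generalizing s with
  | nil => simp [wordDir]
  | cons l w ih => cases l <;> simp [wordDir, ih, hc]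

lemma wordPoint_nonneg (c : Bool → ℤ) (hc : ∀ i, 0 ≤ c i) (s : Bool) (w : List Letter) :
    0 ≤ wordPoint c s w := by
  induction w generalizing s with
  | nil => simp [wordPoint]
  | cons l w ih =>
    have h1 := hc s
    have h2 := ih s
    have h3 := ih (!s)
    cases l <;> simp only [wordPoint] <;> positivity

lemma wordPoint_mono (c d : Bool → ℤ) (hc : ∀ i, 0 ≤ c i) (hcd : ∀ i, c i ≤ d i) (s : Bool)
    (w : List Letter) : wordPoint c s w ≤ wordPoint d s w := by
  induction w generalizing s with
  | nil => simp [wordPoint]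
  | cons l w ih =>
    have h1 := hc s
    have h1' := hcd s
    have h2 := ih s
    have h3 := ih (!s)
    have h4 := wordPoint_nonneg c hc s w
    have h5 : c s * wordPoint c s w ≤ d s * wordPoint d s w :=
      mul_le_mul h1' h2 h4 (h1.trans h1')
    cases l <;> simp only [wordPoint] <;> linarith

end Words

/-! ### Injectivity of base points as polynomials -/

/-- The words that name vertices: `[]` and `[C]` (the ends `0` and `1` of the root edge) and
the words ending in `B` or `BC`, expressed by excluding the other endings. -/
def IsVertexWord (w : List Letter) : Prop :=
  ¬ [A] <:+ w ∧ ¬ [A, C] <:+ w ∧ ¬ [C, C] <:+ w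

lemma IsVertexWord.tail {l : Letter} {w : List Letter} (h : IsVertexWord (l :: w)) :
    IsVertexWord w :=
  ⟨fun h' => h.1 (h'.trans (List.suffix_cons _ _)),
    fun h' => h.2.1 (h'.trans (List.suffix_cons _ _)),
    fun h' => h.2.2 (h'.trans (List.suffix_cons _ _))⟩

lemma isVertexWord_nil : IsVertexWord [] := by
  simp [IsVertexWord]

lemma isVertexWord_C : IsVertexWord [C] := by
  refine ⟨?_, ?_, ?_⟩ <;> rw [← List.reverse_prefix] <;> simp

lemma isVertexWord_append_B (w : List Letter) : IsVertexWord (w ++ [B]) := by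
  refine ⟨?_, ?_, ?_⟩ <;> rw [← List.reverse_prefix] <;> simp

lemma isVertexWord_append_BC (w : List Letter) : IsVertexWord (w ++ [B] ++ [C]) := by
  refine ⟨?_, ?_, ?_⟩ <;> rw [← List.reverse_prefix] <;> simp

/-- A value zero forces all letters to be `A`, hence the empty word among vertex words. -/
lemma eq_nil_of_wordPoint_eq_zero (c : Bool → ℤ) (hc : ∀ i, 0 ≤ c i) (s : Bool) (hs : 0 < c s)
    (w : List Letter) (hw : IsVertexWord w) (h : wordPoint c s w = 0) : w = [] := by
  induction w with
  | nil => rfl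
  | cons l w ih =>
    have h2 := wordPoint_nonneg c hc s w
    have h3 := wordPoint_nonneg c hc (!s) w
    cases l with
    | A =>
      simp only [wordPoint, mul_eq_zero, hs.ne', false_or] at h
      have := ih hw.tail h
      subst this
      exact absurd (List.suffix_refl _) hw.1
    | B => simp only [wordPoint] at h; omega
    | C =>
      simp only [wordPoint] at h
      have := mul_nonneg hs.le h2
      omega

/-- The rhombus angles as the two indeterminates of `ℤ[X][Y]`. -/
noncomputable def polyVar : Bool → ℤ[X][X]
  | false => Polynomial.C X
  | true => X

lemma polyVar_ne_zero (s : Bool) : polyVar s ≠ 0 := by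
  cases s <;> simp [polyVar]

/-- Evaluation of bivariate integer polynomials at `(c false, c true)`. -/
noncomputable def evalPair {R : Type*} [CommRing R] (c : Bool → R) : ℤ[X][X] →+* R :=
  eval₂RingHom (eval₂RingHom (Int.castRingHom R) (c false)) (c true)

lemma evalPair_polyVar {R : Type*} [CommRing R] (c : Bool → R) (s : Bool) :
    evalPair c (polyVar s) = c s := by
  cases s <;> simp [evalPair, polyVar]

lemma evalPair_wordPoint {R : Type*} [CommRing R] (c : Bool → R) (s : Bool) (w : List Letter) :
    evalPair c (wordPoint polyVar s w) = wordPoint c s w := by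
  simp [map_wordPoint, evalPair_polyVar]

/-- The substitution sending the variable of `s` to `p` and the other variable to `q`. -/
def pick (s : Bool) (p q : ℤ) : Bool → ℤ := fun i => if i = s then p else q

lemma pick_nonneg (s : Bool) {p q : ℤ} (hp : 0 ≤ p) (hq : 0 ≤ q) (i : Bool) :
    0 ≤ pick s p q i := by
  unfold pick; split_ifs <;> assumption

lemma pick_self (s : Bool) (p q : ℤ) : pick s p q s = p := by simp [pick]

lemma pick_not (s : Bool) (p q : ℤ) : pick s p q (!s) = q := by simp [pick]

lemma eq_nil_of_poly_eq_zero (s : Bool) (w : List Letter) (hw : IsVertexWord w)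
    (h : wordPoint polyVar s w = 0) : w = [] := by
  have := congrArg (evalPair (fun _ => (1 : ℤ))) h
  rw [evalPair_wordPoint, map_zero] at this
  exact eq_nil_of_wordPoint_eq_zero _ (fun _ => zero_le_one) s zero_lt_one w hw this

lemma eq_C_of_poly_eq_one (s : Bool) (w : List Letter) (hw : IsVertexWord w)
    (h : wordPoint polyVar s w = 1) : w = [C] := by
  have ev : ∀ c : Bool → ℤ, wordPoint c s w = 1 := fun c => by
    rw [← evalPair_wordPoint, h, map_one]
  cases w with
  | nil => simpa [wordPoint] using ev 0
  | cons l w =>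
    cases l with
    | A => simpa [wordPoint] using ev 0
    | B =>
      have h1 := ev (fun _ => 2)
      have := wordPoint_nonneg (fun _ => 2) (fun _ => by norm_num) (!s) w
      simp only [wordPoint] at h1
      omega
    | C =>
      simp only [wordPoint, add_eq_left, mul_eq_zero, polyVar_ne_zero, false_or] at h
      rw [eq_nil_of_poly_eq_zero s w hw.tail h]

/-- A word beginning with `B` and a word beginning with `A` give different polynomials: putting
the variable of `s` to zero leaves nothing of the second, so the first is `[B]`. -/
lemma wordPoint_B_ne_A (s : Bool) (u v : List Letter) (hu : IsVertexWord (B :: u))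
    (hv : IsVertexWord (A :: v)) :
    wordPoint polyVar s (B :: u) ≠ wordPoint polyVar s (A :: v) := by
  intro h
  have h1 := congrArg (evalPair (pick s 0 1)) h
  rw [evalPair_wordPoint, evalPair_wordPoint] at h1
  simp only [wordPoint, pick_self, zero_add, zero_mul] at h1
  have hu' := eq_nil_of_wordPoint_eq_zero _ (pick_nonneg s le_rfl zero_le_one) (!s)
    (by simp [pick_not]) u hu.tail h1
  subst hu'
  simp only [wordPoint, add_zero] at h
  have h2 : wordPoint polyVar s v = 1 :=
    mul_left_cancel₀ (polyVar_ne_zero s) (by rw [← h, mul_one])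
  have h3 := eq_C_of_poly_eq_one s v hv.tail h2
  subst h3
  exact hv.2.1 (List.suffix_refl _)

/-- A word beginning with `B` and a word beginning with `C` give different polynomials: putting
the variable of `s` to zero leaves only `1` of the second, which forces the first to be `BC`. -/
lemma wordPoint_B_ne_C (s : Bool) (u v : List Letter) (hu : IsVertexWord (B :: u))
    (hv : IsVertexWord (C :: v)) :
    wordPoint polyVar s (B :: u) ≠ wordPoint polyVar s (C :: v) := by
  intro h
  have ev : ∀ c : Bool → ℤ, c s = 0 → wordPoint c (!s) u = 1 := fun c hc => by
    have h1 := congrArg (evalPair c) h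
    rw [evalPair_wordPoint, evalPair_wordPoint] at h1
    simpa [wordPoint, hc] using h1
  have h0 := ev 0 rfl
  have h1 := ev (pick s 0 1) (pick_self _ _ _)
  have hu' : u = [C] := by
    cases u with
    | nil => simp [wordPoint] at h0
    | cons l u =>
      cases l with
      | A => simp [wordPoint] at h0
      | B =>
        have := wordPoint_mono 0 (pick s 0 1) (fun _ => le_rfl)
          (pick_nonneg s le_rfl zero_le_one) s u
        simp only [wordPoint, Bool.not_not, pick_not, Pi.zero_apply] at h0 h1
        omega
      | C =>
        simp only [wordPoint, pick_not, one_mul, add_eq_left] at h1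
        rw [eq_nil_of_wordPoint_eq_zero _ (pick_nonneg s le_rfl zero_le_one) (!s)
          (by simp [pick_not]) u hu.tail.tail h1]
  subst hu'
  simp only [wordPoint, mul_zero, add_zero] at h
  have h2 : wordPoint polyVar s v = 1 :=
    mul_left_cancel₀ (polyVar_ne_zero s) (by linear_combination -h)
  have h3 := eq_C_of_poly_eq_one s v hv.tail h2
  subst h3
  exact hv.2.2 (List.suffix_refl _)

lemma wordPoint_A_ne_C (s : Bool) (u v : List Letter) :
    wordPoint polyVar s (A :: u) ≠ wordPoint polyVar s (C :: v) := by
  intro h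
  have h1 := congrArg (evalPair (0 : Bool → ℤ)) h
  rw [evalPair_wordPoint, evalPair_wordPoint] at h1
  simp [wordPoint] at h1

theorem wordPoint_injective (s : Bool) (u v : List Letter) (hu : IsVertexWord u)
    (hv : IsVertexWord v) (h : wordPoint polyVar s u = wordPoint polyVar s v) : u = v := by
  induction u generalizing s v with
  | nil => exact (eq_nil_of_poly_eq_zero s v hv h.symm).symm
  | cons l u ih =>
    cases v with
    | nil => exact eq_nil_of_poly_eq_zero s _ hu h
    | cons k v =>
      cases l <;> cases k
      · simp only [wordPoint] at h
        rw [ih s v hu.tail hv.tail (mul_left_cancel₀ (polyVar_ne_zero s) h)]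
      · exact absurd h.symm (wordPoint_B_ne_A s v u hv hu)
      · exact absurd h (wordPoint_A_ne_C s u v)
      · exact absurd h (wordPoint_B_ne_A s u v hu hv)
      · simp only [wordPoint] at h
        rw [ih (!s) v hu.tail hv.tail (add_left_cancel h)]
      · exact absurd h (wordPoint_B_ne_C s u v hu hv)
      · exact absurd h.symm (wordPoint_A_ne_C s v u)
      · exact absurd h.symm (wordPoint_B_ne_C s v u hv hu)
      · simp only [wordPoint] at h
        rw [ih s v hu.tail hv.tail (mul_left_cancel₀ (polyVar_ne_zero s) (add_left_cancel h))]

/-- Two base points are exchanged by the reflection `z ↦ 1 - z` only if one of them is `0`. -/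
theorem wordPoint_reflect (s : Bool) (u v : List Letter) (hu : IsVertexWord u)
    (hv : IsVertexWord v) (h : wordPoint polyVar s u + wordPoint polyVar s v = 1) :
    u = [] ∨ v = [] := by
  have h1 := congrArg (evalPair (fun _ => (1 : ℤ))) h
  rw [map_add, evalPair_wordPoint, evalPair_wordPoint, map_one] at h1
  have hu0 := wordPoint_nonneg (fun _ => 1) (fun _ => zero_le_one) s u
  have hv0 := wordPoint_nonneg (fun _ => 1) (fun _ => zero_le_one) s v
  by_cases hz : wordPoint (fun _ => (1 : ℤ)) s u = 0
  · exact Or.inl (eq_nil_of_wordPoint_eq_zero _ (fun _ => zero_le_one) s zero_lt_one u hu hz)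
  · exact Or.inr (eq_nil_of_wordPoint_eq_zero _ (fun _ => zero_le_one) s zero_lt_one v hv
      (by omega))

/-! ### The infinite rhombus tree in the plane -/

/-- A slot is an edge of the infinite tree to which one more triangle can be attached: the side of
the root edge it lies on (`true` being the reflected one), a word `w`, and a flag. With the flag
`false` it is the rhombus edge with word `w`; with the flag `true` it is the base (a diagonal) of
the rhombus erected over that edge. -/
structure Slot_s2 where
  side : Bool
  half : Bool
  word : List Letter

/-- The identity on the first side of the root edge, the point reflection exchanging `0` and `1`
on the second. -/
def flipSide (t : Bool) (z : ℂ) : ℂ := if t then 1 - z else z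

namespace Slot_s2

/-- The word naming the vertex that is added at a slot. -/
def newWord (σ : Slot_s2) : List Letter :=
  if σ.half then σ.word ++ [B] ++ [C] else σ.word ++ [B]

/-- The position of the vertex added at a slot. -/
noncomputable def newPoint (c : Bool → ℂ) (σ : Slot_s2) : ℂ :=
  flipSide σ.side (wordPoint c false σ.newWord)

/-- The first end of a slot. -/
noncomputable def fstEnd (c : Bool → ℂ) (σ : Slot_s2) : ℂ :=
  flipSide σ.side (if σ.half then wordPoint c false (σ.word ++ [B]) else wordPoint c false σ.word)

/-- The second end of a slot. -/
noncomputable def sndEnd (c : Bool → ℂ) (σ : Slot_s2) : ℂ :=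
  flipSide σ.side (wordPoint c false (σ.word ++ [C]))

/-- `Child σ τ`: the slot `τ` is one of the two new edges of the triangle attached at `σ`. -/
inductive Child : Slot_s2 → Slot_s2 → Prop
  | leg (t : Bool) (w : List Letter) : Child ⟨t, false, w⟩ ⟨t, false, w ++ [A]⟩
  | base (t : Bool) (w : List Letter) : Child ⟨t, false, w⟩ ⟨t, true, w⟩
  | left (t : Bool) (w : List Letter) : Child ⟨t, true, w⟩ ⟨t, false, w ++ [B]⟩
  | right (t : Bool) (w : List Letter) : Child ⟨t, true, w⟩ ⟨t, false, w ++ [C]⟩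

lemma Child.unique {σ σ' τ : Slot_s2} (h : Child σ τ) (h' : Child σ' τ) : σ = σ' := by
  rcases h with ⟨t, w⟩ | ⟨t, w⟩ | ⟨t, w⟩ | ⟨t, w⟩ <;> generalize hτ : Slot_s2.mk _ _ _ = τ at h' <;>
    rcases h' with ⟨t', w'⟩ | ⟨t', w'⟩ | ⟨t', w'⟩ | ⟨t', w'⟩ <;> simp_all

lemma Child.ne {σ τ : Slot_s2} (h : Child σ τ) : τ ≠ σ := by
  cases h <;> simp

lemma not_child_root (σ : Slot_s2) (t : Bool) : ¬ Child σ ⟨t, false, []⟩ := by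
  intro h
  generalize hτ : Slot_s2.mk _ _ _ = τ at h
  cases h <;> simp at hτ

lemma isVertexWord_newWord (σ : Slot_s2) : IsVertexWord σ.newWord := by
  unfold newWord
  split_ifs
  · exact isVertexWord_append_BC _
  · exact isVertexWord_append_B _

lemma newWord_ne_nil (σ : Slot_s2) : σ.newWord ≠ [] := by
  unfold newWord; split_ifs <;> simp

lemma newWord_ne_C (σ : Slot_s2) : σ.newWord ≠ [C] := by
  intro h
  have := congrArg List.reverse h
  unfold newWord at this
  split_ifs at this <;> simp at this

lemma newWord_injective {σ τ : Slot_s2} (hs : σ.side = τ.side) (h : σ.newWord = τ.newWord) :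
    σ = τ := by
  rcases σ with ⟨t, i, w⟩
  rcases τ with ⟨t', j, w'⟩
  have h' := congrArg List.reverse h
  cases i <;> cases j <;> simp [newWord] at h' <;> simp_all

end Slot_s2

/-- The two numbers `c false`, `c true` are algebraically independent over `ℤ`. -/
def Generic (c : Bool → ℂ) : Prop := Function.Injective (evalPair c)

lemma Generic.wordPoint_inj {c : Bool → ℂ} (hc : Generic c) {u v : List Letter}
    (hu : IsVertexWord u) (hv : IsVertexWord v)
    (h : wordPoint c false u = wordPoint c false v) : u = v := by
  rw [← evalPair_wordPoint c, ← evalPair_wordPoint c] at h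
  exact wordPoint_injective false u v hu hv (hc h)

lemma Generic.reflect_ne {c : Bool → ℂ} (hc : Generic c) {u v : List Letter}
    (hu : IsVertexWord u) (hv : IsVertexWord v) (hu0 : u ≠ []) (hv0 : v ≠ []) :
    wordPoint c false u ≠ 1 - wordPoint c false v := by
  intro h
  rw [eq_sub_iff_add_eq, ← evalPair_wordPoint c, ← evalPair_wordPoint c, ← map_add,
    ← map_one (evalPair c)] at h
  rcases wordPoint_reflect false u v hu hv (hc h) with h | h
  · exact hu0 h
  · exact hv0 h

namespace Slot_s2

variable {c : Bool → ℂ}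

lemma newPoint_injective (hc : Generic c) {σ τ : Slot_s2} (h : σ.newPoint c = τ.newPoint c) :
    σ = τ := by
  have hσ := σ.isVertexWord_newWord
  have hτ := τ.isVertexWord_newWord
  have key := hc.reflect_ne hσ hτ σ.newWord_ne_nil τ.newWord_ne_nil
  have key' := hc.reflect_ne hτ hσ τ.newWord_ne_nil σ.newWord_ne_nil
  unfold newPoint flipSide at h
  cases hs : σ.side <;> cases ht : τ.side <;>
    simp only [hs, ht, if_true, if_false, Bool.false_eq_true] at h
  · exact newWord_injective (hs.trans ht.symm) (hc.wordPoint_inj hσ hτ h)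
  · exact absurd h key
  · exact absurd h.symm key'
  · exact newWord_injective (hs.trans ht.symm) (hc.wordPoint_inj hσ hτ (sub_right_injective h))

lemma newPoint_ne_zero_one (hc : Generic c) (σ : Slot_s2) :
    σ.newPoint c ≠ 0 ∧ σ.newPoint c ≠ 1 := by
  have h0 : wordPoint c false σ.newWord ≠ 0 := fun h =>
    σ.newWord_ne_nil (hc.wordPoint_inj σ.isVertexWord_newWord isVertexWord_nil
      (h.trans (by simp [wordPoint])))
  have h1 : wordPoint c false σ.newWord ≠ 1 := fun h =>
    σ.newWord_ne_C (hc.wordPoint_inj σ.isVertexWord_newWord isVertexWord_C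
      (h.trans (by simp [wordPoint])))
  unfold newPoint flipSide
  split_ifs
  · exact ⟨fun h => h1 (by linear_combination -h), fun h => h0 (by linear_combination -h)⟩
  · exact ⟨h0, h1⟩

lemma dist_flipSide (t : Bool) (z w : ℂ) : dist (flipSide t z) (flipSide t w) = ‖z - w‖ := by
  unfold flipSide
  split_ifs
  · rw [dist_eq_norm, ← norm_neg]; congr 1; ring
  · rw [dist_eq_norm]

/-- The first new edge of the triangle at `σ` is a slot again, and it has unit length. -/
lemma exists_child_fst (hn : ∀ i, ‖c i‖ = 1) (σ : Slot_s2) :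
    (∃ τ, Child σ τ ∧ ((σ.fstEnd c = τ.fstEnd c ∧ σ.newPoint c = τ.sndEnd c))) ∧
      dist (σ.fstEnd c) (σ.newPoint c) = 1 := by
  rcases σ with ⟨t, i, w⟩
  have hd := norm_wordDir c hn false w
  cases i
  · refine ⟨⟨_, Child.leg t w, ?_, ?_⟩, ?_⟩
    · simp only [fstEnd, wordPoint_append_A, Bool.false_eq_true, if_false]
    · simp only [newPoint, newWord, sndEnd, wordPoint_append_A, wordPoint_append_B,
        wordPoint_append_C, wordDir_append_A, Bool.false_eq_true, if_false]
    · simp only [newPoint, newWord, fstEnd, dist_flipSide, wordPoint_append_B, Bool.false_eq_true,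
        if_false]
      rw [sub_add_cancel_left, norm_neg, norm_mul, hd, hn, one_mul]
  · refine ⟨⟨_, Child.left t w, ?_, ?_⟩, ?_⟩
    · simp only [fstEnd, Bool.false_eq_true, if_false, if_true]
    · simp only [newPoint, newWord, sndEnd, if_true]
    · simp only [newPoint, newWord, fstEnd, dist_flipSide, wordPoint_append_C, if_true]
      rw [sub_add_cancel_left, norm_neg, wordDir_append_B, hd]

/-- The second new edge of the triangle at `σ` is a slot again, and it is a leg of unit length or
a base. -/
lemma exists_child_snd (hn : ∀ i, ‖c i‖ = 1) (σ : Slot_s2) :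
    (∃ τ, Child σ τ ∧ ((σ.sndEnd c = τ.fstEnd c ∧ σ.newPoint c = τ.sndEnd c) ∨
        (σ.sndEnd c = τ.sndEnd c ∧ σ.newPoint c = τ.fstEnd c))) ∧
      (dist (σ.sndEnd c) (σ.newPoint c) = 1 ∨
        ∃ i, dist (σ.sndEnd c) (σ.newPoint c) = ‖1 - c i‖) := by
  rcases σ with ⟨t, i, w⟩
  have hd := norm_wordDir c hn false w
  cases i
  · refine ⟨⟨_, Child.base t w, Or.inr ⟨?_, ?_⟩⟩, Or.inr ⟨wordBit false w, ?_⟩⟩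
    · simp only [sndEnd]
    · simp only [newPoint, newWord, fstEnd, Bool.false_eq_true, if_false, if_true]
    · simp only [newPoint, newWord, sndEnd, dist_flipSide, wordPoint_append_B, wordPoint_append_C,
        Bool.false_eq_true, if_false]
      rw [add_sub_add_left_eq_sub, ← mul_one_sub, norm_mul, hd, one_mul]
  · refine ⟨⟨_, Child.right t w, Or.inl ⟨?_, ?_⟩⟩, Or.inl ?_⟩
    · simp only [sndEnd, fstEnd, Bool.false_eq_true, if_false]
    · simp only [newPoint, newWord, sndEnd, if_true, wordPoint_append_B, wordPoint_append_C,
        wordDir_append_B, wordDir_append_C]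
      congr 1; ring
    · simp only [newPoint, newWord, sndEnd, dist_flipSide, wordPoint_append_B, wordPoint_append_C,
        wordDir_append_B, if_true]
      rw [← norm_neg, ← hn (wordBit false w), ← one_mul ‖c _‖, ← hd, ← norm_mul]
      congr 1; ring

end Slot_s2

/-! ### Drawing Δ-trees -/

/-- The points `p`, `q` are the ends of the slot `σ`, in some order. -/
def Ends (c : Bool → ℂ) (σ : Slot_s2) (p q : ℂ) : Prop :=
  (p = σ.fstEnd c ∧ q = σ.sndEnd c) ∨ (p = σ.sndEnd c ∧ q = σ.fstEnd c)

lemma Ends.symm {c : Bool → ℂ} {σ : Slot_s2} {p q : ℂ} (h : Ends c σ p q) : Ends c σ q p := by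
  unfold Ends at *; tauto

/-- `{1, ‖1 - c false‖, ‖1 - c true‖}`: the edge-lengths of the infinite tree. -/
def lengths (c : Bool → ℂ) : Set ℝ := {1, ‖1 - c false‖, ‖1 - c true‖}

/-- The edge from either end of a slot to its new vertex is a slot again, of admissible length. -/
lemma exists_child {c : Bool → ℂ} (hn : ∀ i, ‖c i‖ = 1) {σ : Slot_s2} {p q : ℂ}
    (h : Ends c σ p q) :
    (∃ τ, Slot_s2.Child σ τ ∧ Ends c τ p (σ.newPoint c)) ∧ dist p (σ.newPoint c) ∈ lengths c := by
  rcases h with ⟨rfl, -⟩ | ⟨rfl, -⟩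
  · obtain ⟨⟨τ, h1, h2⟩, h3⟩ := σ.exists_child_fst hn
    exact ⟨⟨τ, h1, Or.inl h2⟩, by rw [h3]; simp [lengths]⟩
  · obtain ⟨⟨τ, h1, h2⟩, h3⟩ := σ.exists_child_snd hn
    refine ⟨⟨τ, h1, h2⟩, ?_⟩
    rcases h3 with h3 | ⟨i, h3⟩
    · rw [h3]; simp [lengths]
    · rw [h3]; cases i <;> simp [lengths]

/-- A drawing `f` of a Δ-tree inside the infinite tree, where `U` is the set of slots already
used. Every external edge occupies an unused slot all of whose ancestors are used. -/
structure TreeDrawing (c : Bool → ℂ) (V : Finset ℕ) (E ext : Finset (Sym2 ℕ)) (f : ℕ → ℂ)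
    (U : Set Slot_s2) : Prop where
  injOn : Set.InjOn f ↑V
  mem_range : ∀ v ∈ V, f v = 0 ∨ f v = 1 ∨ ∃ σ ∈ U, f v = σ.newPoint c
  length_mem : ∀ u w, s(u, w) ∈ E → u ∈ V ∧ w ∈ V ∧ dist (f u) (f w) ∈ lengths c
  ext_subset : ext ⊆ E
  closed : ∀ σ τ, Slot_s2.Child σ τ → τ ∈ U → σ ∈ U
  slot : ∀ u w, s(u, w) ∈ ext → ∃ τ, τ ∉ U ∧ (∀ σ, Slot_s2.Child σ τ → σ ∈ U) ∧ Ends c τ (f u) (f w)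

/-- The initial triangle is `0, 1, c false`. -/
lemma treeDrawing_triangle {c : Bool → ℂ} (hc : Generic c) (hn : ∀ i, ‖c i‖ = 1) (u v w : ℕ)
    (huv : u ≠ v) (huw : u ≠ w) (hvw : v ≠ w) :
    ∃ f U, TreeDrawing c {u, v, w} {s(u, v), s(u, w), s(v, w)} {s(u, v), s(u, w), s(v, w)} f U := by
  classical
  let ρ : Slot_s2 := ⟨false, false, []⟩
  let f : ℕ → ℂ := fun n => if n = u then 0 else if n = v then 1 else ρ.newPoint c
  have fu : f u = 0 := by simp [f]
  have fv : f v = 1 := by simp [f, huv.symm]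
  have fw : f w = ρ.newPoint c := by simp [f, huw.symm, hvw.symm]
  have hρ := ρ.newPoint_ne_zero_one hc
  have e01 : Ends c ρ 0 1 := Or.inl (by
    simp [ρ, Slot_s2.fstEnd, Slot_s2.sndEnd, wordPoint, flipSide])
  have e01' : Ends c ⟨true, false, []⟩ 0 1 := Or.inr (by
    simp [Slot_s2.fstEnd, Slot_s2.sndEnd, wordPoint, flipSide])
  obtain ⟨⟨τ, t1, t2⟩, t3⟩ := exists_child hn e01
  obtain ⟨⟨τ', t5, t6⟩, t7⟩ := exists_child hn e01.symm
  have hroot : (⟨true, false, []⟩ : Slot_s2) ∉ ({ρ} : Set Slot_s2) := by simp [ρ]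
  have d01 : dist (0 : ℂ) 1 ∈ lengths c := by simp [lengths]
  refine ⟨f, {ρ}, ?_, ?_, ?_, subset_rfl, ?_, ?_⟩
  · intro i hi j hj hij
    simp only [Finset.coe_insert, Finset.coe_singleton, Set.mem_insert_iff,
      Set.mem_singleton_iff] at hi hj
    rcases hi with rfl | rfl | rfl <;> rcases hj with rfl | rfl | rfl <;>
      simp only [fu, fv, fw] at hij <;> first
      | rfl
      | exact absurd hij hρ.1
      | exact absurd hij hρ.2
      | exact absurd hij.symm hρ.1
      | exact absurd hij.symm hρ.2
      | exact absurd hij zero_ne_one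
      | exact absurd hij one_ne_zero
  · intro i hi
    simp only [Finset.mem_insert, Finset.mem_singleton] at hi
    rcases hi with rfl | rfl | rfl
    · exact Or.inl fu
    · exact Or.inr (Or.inl fv)
    · exact Or.inr (Or.inr ⟨ρ, rfl, fw⟩)
  · intro i j hij
    simp only [Finset.mem_insert, Finset.mem_singleton, Sym2.eq_iff] at hij
    rcases hij with (⟨rfl, rfl⟩ | ⟨rfl, rfl⟩) | (⟨rfl, rfl⟩ | ⟨rfl, rfl⟩) |
        (⟨rfl, rfl⟩ | ⟨rfl, rfl⟩) <;>
      refine ⟨by simp, by simp, ?_⟩ <;> simp only [fu, fv, fw] <;> first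
      | assumption
      | (rw [dist_comm]; assumption)
  · rintro σ τ h rfl
    exact absurd h (Slot_s2.not_child_root _ _)
  · intro i j hij
    have key : ∀ {τ p}, Slot_s2.Child ρ τ → Ends c τ p (ρ.newPoint c) →
        ∃ τ, τ ∉ ({ρ} : Set Slot_s2) ∧ (∀ σ, Slot_s2.Child σ τ → σ ∈ ({ρ} : Set Slot_s2)) ∧
          Ends c τ p (ρ.newPoint c) :=
      fun {τ p} h1 h2 => ⟨τ, h1.ne, fun σ h => h.unique h1, h2⟩
    have key0 : ∃ τ, τ ∉ ({ρ} : Set Slot_s2) ∧ (∀ σ, Slot_s2.Child σ τ → σ ∈ ({ρ} : Set Slot_s2)) ∧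
          Ends c τ 0 1 :=
      ⟨_, hroot, fun σ h => absurd h (Slot_s2.not_child_root _ _), e01'⟩
    have sym : ∀ {p q}, (∃ τ, τ ∉ ({ρ} : Set Slot_s2) ∧
        (∀ σ, Slot_s2.Child σ τ → σ ∈ ({ρ} : Set Slot_s2)) ∧ Ends c τ p q) →
        ∃ τ, τ ∉ ({ρ} : Set Slot_s2) ∧ (∀ σ, Slot_s2.Child σ τ → σ ∈ ({ρ} : Set Slot_s2)) ∧
          Ends c τ q p := fun ⟨τ, h1, h2, h3⟩ => ⟨τ, h1, h2, h3.symm⟩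
    simp only [Finset.mem_insert, Finset.mem_singleton, Sym2.eq_iff] at hij
    rcases hij with (⟨rfl, rfl⟩ | ⟨rfl, rfl⟩) | (⟨rfl, rfl⟩ | ⟨rfl, rfl⟩) |
        (⟨rfl, rfl⟩ | ⟨rfl, rfl⟩) <;> simp only [fu, fv, fw]
    · exact key0
    · exact sym key0
    · exact key t1 t2
    · exact sym (key t1 t2)
    · exact key t5 t6
    · exact sym (key t5 t6)

/-- The triangle over the external edge `s(u, w)` is drawn at the slot of that edge. -/
lemma TreeDrawing.extend {c : Bool → ℂ} (hc : Generic c) (hn : ∀ i, ‖c i‖ = 1) {V : Finset ℕ}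
    {E ext : Finset (Sym2 ℕ)} {f : ℕ → ℂ} {U : Set Slot_s2} (h : TreeDrawing c V E ext f U)
    {u w z : ℕ} (huw : s(u, w) ∈ ext) (hz : z ∉ V) :
    ∃ f U, TreeDrawing c (insert z V) (insert s(u, z) (insert s(z, w) E))
        (insert s(u, z) (insert s(z, w) (ext.erase s(u, w)))) f U := by
  classical
  obtain ⟨σ, hσU, hσp, hσe⟩ := h.slot u w huw
  obtain ⟨hu, hw, -⟩ := h.length_mem u w (h.ext_subset huw)
  obtain ⟨⟨τ, t1, t2⟩, t3⟩ := exists_child hn hσe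
  obtain ⟨⟨τ', t5, t6⟩, t7⟩ := exists_child hn hσe.symm
  let g : ℕ → ℂ := Function.update f z (σ.newPoint c)
  have gz : g z = σ.newPoint c := by simp [g]
  have gV : ∀ v ∈ V, g v = f v := fun v hv => by
    have : v ≠ z := fun h => hz (h ▸ hv)
    simp [g, this]
  have hnew : ∀ v ∈ V, f v ≠ σ.newPoint c := by
    intro v hv hfv
    rcases h.mem_range v hv with h1 | h1 | ⟨σ', hσ', h1⟩
    · exact (σ.newPoint_ne_zero_one hc).1 (hfv.symm.trans h1)
    · exact (σ.newPoint_ne_zero_one hc).2 (hfv.symm.trans h1)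
    · exact hσU (Slot_s2.newPoint_injective hc (h1.symm.trans hfv) ▸ hσ')
  have newslot : ∀ {τ p}, Slot_s2.Child σ τ → Ends c τ p (σ.newPoint c) →
      ∃ τ, τ ∉ insert σ U ∧ (∀ ρ, Slot_s2.Child ρ τ → ρ ∈ insert σ U) ∧
        Ends c τ p (σ.newPoint c) := by
    intro τ p h1 h2
    refine ⟨τ, ?_, fun ρ hρ => Or.inl (hρ.unique h1), h2⟩
    rintro (h3 | h3)
    · exact h1.ne h3
    · exact hσU (h.closed _ _ h1 h3)
  have sym : ∀ {p q}, (∃ τ, τ ∉ insert σ U ∧ (∀ ρ, Slot_s2.Child ρ τ → ρ ∈ insert σ U) ∧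
      Ends c τ p q) → ∃ τ, τ ∉ insert σ U ∧ (∀ ρ, Slot_s2.Child ρ τ → ρ ∈ insert σ U) ∧
        Ends c τ q p := fun ⟨τ, h1, h2, h3⟩ => ⟨τ, h1, h2, h3.symm⟩
  refine ⟨g, insert σ U, ?_, ?_, ?_, ?_, ?_, ?_⟩
  · intro i hi j hj hij
    simp only [Finset.coe_insert, Set.mem_insert_iff, Finset.mem_coe] at hi hj
    rcases hi with rfl | hi <;> rcases hj with rfl | hj
    · rfl
    · rw [gz, gV j hj] at hij
      exact absurd hij.symm (hnew j hj)
    · rw [gz, gV i hi] at hij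
      exact absurd hij (hnew i hi)
    · rw [gV i hi, gV j hj] at hij
      exact h.injOn hi hj hij
  · intro i hi
    rcases Finset.mem_insert.1 hi with rfl | hi
    · exact Or.inr (Or.inr ⟨σ, Set.mem_insert _ _, gz⟩)
    · rw [gV i hi]
      rcases h.mem_range i hi with h1 | h1 | ⟨σ', hσ', h1⟩
      · exact Or.inl h1
      · exact Or.inr (Or.inl h1)
      · exact Or.inr (Or.inr ⟨σ', Set.mem_insert_of_mem _ hσ', h1⟩)
  · intro i j hij
    simp only [Finset.mem_insert] at hij
    rcases hij with hij | hij | hij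
    · rcases Sym2.eq_iff.1 hij with ⟨rfl, rfl⟩ | ⟨rfl, rfl⟩
      · exact ⟨by simp [hu], by simp, by rw [gz, gV _ hu]; exact t3⟩
      · exact ⟨by simp, by simp [hu], by rw [gz, gV _ hu, dist_comm]; exact t3⟩
    · rcases Sym2.eq_iff.1 hij with ⟨rfl, rfl⟩ | ⟨rfl, rfl⟩
      · exact ⟨by simp, by simp [hw], by rw [gz, gV _ hw, dist_comm]; exact t7⟩
      · exact ⟨by simp [hw], by simp, by rw [gz, gV _ hw]; exact t7⟩
    · obtain ⟨hi, hj, hd⟩ := h.length_mem i j hij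
      exact ⟨by simp [hi], by simp [hj], by rw [gV i hi, gV j hj]; exact hd⟩
  · exact Finset.insert_subset_insert _ (Finset.insert_subset_insert _
      ((Finset.erase_subset _ _).trans h.ext_subset))
  · rintro ρ τ hρ (rfl | hτ)
    · exact Or.inr (hσp ρ hρ)
    · exact Or.inr (h.closed ρ τ hρ hτ)
  · intro i j hij
    simp only [Finset.mem_insert, Finset.mem_erase] at hij
    rcases hij with hij | hij | ⟨hne, hij⟩
    · rcases Sym2.eq_iff.1 hij with ⟨rfl, rfl⟩ | ⟨rfl, rfl⟩
      · rw [gz, gV _ hu]; exact newslot t1 t2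
      · rw [gz, gV _ hu]; exact sym (newslot t1 t2)
    · rcases Sym2.eq_iff.1 hij with ⟨rfl, rfl⟩ | ⟨rfl, rfl⟩
      · rw [gz, gV _ hw]; exact sym (newslot t5 t6)
      · rw [gz, gV _ hw]; exact newslot t5 t6
    · obtain ⟨hi, hj, -⟩ := h.length_mem i j (h.ext_subset hij)
      obtain ⟨τ, hτ, hτp, hτe⟩ := h.slot i j hij
      rw [gV i hi, gV j hj]
      refine ⟨τ, ?_, fun ρ hρ => Or.inr (hτp ρ hρ), hτe⟩
      -- Two edges with the same slot have the same ends, so they agree by injectivity of `f`.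
      rintro (rfl | h3)
      · apply hne
        rw [Sym2.eq_iff]
        rcases hτe with ⟨a1, a2⟩ | ⟨a1, a2⟩ <;> rcases hσe with ⟨b1, b2⟩ | ⟨b1, b2⟩
        · exact Or.inl ⟨h.injOn hi hu (a1.trans b1.symm), h.injOn hj hw (a2.trans b2.symm)⟩
        · exact Or.inr ⟨h.injOn hi hw (a1.trans b2.symm), h.injOn hj hu (a2.trans b1.symm)⟩
        · exact Or.inr ⟨h.injOn hi hw (a1.trans b2.symm), h.injOn hj hu (a2.trans b1.symm)⟩
        · exact Or.inl ⟨h.injOn hi hu (a1.trans b1.symm), h.injOn hj hw (a2.trans b2.symm)⟩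
      · exact hτ h3

theorem exists_drawing {c : Bool → ℂ} (hc : Generic c) (hn : ∀ i, ‖c i‖ = 1) {V : Finset ℕ}
    {E ext : Finset (Sym2 ℕ)} (h : IsDeltaTreeAux V E ext) :
    ∃ f U, TreeDrawing c V E ext f U := by
  induction h with
  | triangle u v w huv huw hvw => exact treeDrawing_triangle hc hn u v w huv huw hvw
  | extend V E ext u w z _ huw hz ih =>
    obtain ⟨f, U, ih⟩ := ih
    exact ih.extend hc hn huw hz

/-! ### Genericity of almost every triple -/

/-- The unit complex number at distance `2 r` from `1`, for `0 ≤ r ≤ 1`. -/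
noncomputable def apex (r : ℝ) : ℂ := Complex.exp ((2 * Real.arcsin r : ℝ) * Complex.I)

lemma norm_apex (r : ℝ) : ‖apex r‖ = 1 := Complex.norm_exp_ofReal_mul_I _

lemma norm_one_sub_apex {r : ℝ} (h0 : 0 ≤ r) (h1 : r ≤ 1) : ‖1 - apex r‖ = 2 * r := by
  rw [norm_sub_rev, apex, mul_comm _ Complex.I, Complex.norm_exp_I_mul_ofReal_sub_one]
  rw [mul_div_cancel_left₀ _ (two_ne_zero), Real.sin_arcsin (by linarith) h1, Real.norm_eq_abs,
    abs_of_nonneg (by linarith)]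

lemma measurable_apex : Measurable apex := by
  unfold apex
  have := Real.continuous_arcsin
  exact Continuous.measurable (by fun_prop)

/-- The pair of apices belonging to legs `t.1` and bases `t.2.1`, `t.2.2`. -/
noncomputable def apexPair (t : ℝ × ℝ × ℝ) : Bool → ℂ :=
  fun i => apex ((if i then t.2.2 else t.2.1) / (2 * t.1))

lemma finite_apex_roots (q : ℂ[X]) (hq : q ≠ 0) (a : ℝ) :
    {b : ℝ | 0 < b ∧ b < 2 * a ∧ q.eval (apex (b / (2 * a))) = 0}.Finite := by
  refine Set.Finite.of_finite_image (f := fun b => apex (b / (2 * a))) ?_ ?_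
  · refine (q.rootSet_finite ℂ).subset ?_
    rintro _ ⟨b, ⟨-, -, h⟩, rfl⟩
    rw [mem_rootSet]
    exact ⟨hq, by simpa using h⟩
  · rintro b ⟨hb0, hb1, -⟩ b' ⟨hb0', hb1', -⟩ h
    have ha : 0 < 2 * a := hb0.trans hb1
    have e1 := norm_one_sub_apex (div_nonneg hb0.le ha.le) ((div_le_one ha).2 hb1.le)
    have e2 := norm_one_sub_apex (div_nonneg hb0'.le ha.le) ((div_le_one ha).2 hb1'.le)
    simp only at h
    rw [h, e2] at e1
    have e3 := mul_left_cancel₀ two_ne_zero e1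
    exact ((div_left_inj' ha.ne').1 e3).symm

lemma evalPair_eq (c : Bool → ℂ) (p : ℤ[X][X]) :
    evalPair c p = (p.map (eval₂RingHom (Int.castRingHom ℂ) (c false))).eval (c true) := by
  simp [evalPair, eval₂_eq_eval_map]

lemma measurable_evalPair (p : ℤ[X][X]) : Measurable fun t => evalPair (apexPair t) p := by
  have hm : ∀ i, Measurable fun t => apexPair t i := fun i => by
    refine measurable_apex.comp ?_
    cases i <;> simp <;> fun_prop
  simp only [evalPair, coe_eval₂RingHom, eval₂_eq_sum, Polynomial.sum_def]
  refine Finset.measurable_sum _ fun n _ => Measurable.mul ?_ ((hm true).pow_const n)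
  refine Finset.measurable_sum _ fun k _ => Measurable.mul ?_ ((hm false).pow_const k)
  exact measurable_const

/-- By Fubini: for all but finitely many `b` the polynomial `p (x, Y)` is nonzero, and then it has
finitely many zeros. -/
lemma volume_zeros (p : ℤ[X][X]) (hp : p ≠ 0) :
    volume {t : ℝ × ℝ × ℝ | (0 < t.2.1 ∧ t.2.1 < 2 * t.1 ∧ 0 < t.2.2 ∧ t.2.2 < 2 * t.1) ∧
      evalPair (apexPair t) p = 0} = 0 := by
  have hmeas : MeasurableSet {t : ℝ × ℝ × ℝ |
      (0 < t.2.1 ∧ t.2.1 < 2 * t.1 ∧ 0 < t.2.2 ∧ t.2.2 < 2 * t.1) ∧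
        evalPair (apexPair t) p = 0} := by
    refine MeasurableSet.inter ?_ (measurable_evalPair p (measurableSet_singleton 0))
    have hb : Measurable fun t : ℝ × ℝ × ℝ => t.2.1 := by fun_prop
    have hd : Measurable fun t : ℝ × ℝ × ℝ => t.2.2 := by fun_prop
    have ha : Measurable fun t : ℝ × ℝ × ℝ => 2 * t.1 := by fun_prop
    exact (measurableSet_lt measurable_const hb).inter ((measurableSet_lt hb ha).inter
      ((measurableSet_lt measurable_const hd).inter (measurableSet_lt hd ha)))
  rw [Measure.volume_eq_prod, Measure.measure_prod_null hmeas]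
  refine Filter.Eventually.of_forall fun a => ?_
  rw [Measure.volume_eq_prod, Pi.zero_apply,
    Measure.measure_prod_null (measurable_prodMk_left hmeas)]
  have hq : p.leadingCoeff.map (Int.castRingHom ℂ) ≠ 0 := by
    rw [Ne, Polynomial.map_eq_zero_iff (RingHom.injective_int _)]
    exact leadingCoeff_ne_zero.2 hp
  have hfin := finite_apex_roots _ hq a
  filter_upwards [hfin.countable.ae_notMem volume] with b hb
  by_cases hab : 0 < b ∧ b < 2 * a
  · have hpx : p.map (eval₂RingHom (Int.castRingHom ℂ) (apex (b / (2 * a)))) ≠ 0 := by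
      intro h0
      have h1 := congrArg (fun r => r.coeff p.natDegree) h0
      simp only [coeff_map, coeff_natDegree, coeff_zero, coe_eval₂RingHom] at h1
      rw [eval₂_eq_eval_map] at h1
      exact hb ⟨hab.1, hab.2, h1⟩
    refine (((finite_apex_roots _ hpx a).subset ?_).countable).measure_zero _
    rintro y ⟨⟨-, -, h1, h2⟩, h3⟩
    refine ⟨h1, h2, ?_⟩
    rw [evalPair_eq] at h3
    simpa [apexPair] using h3
  · rw [Pi.zero_apply]
    convert measure_empty (μ := (volume : Measure ℝ))
    refine Set.eq_empty_of_forall_notMem fun y h => hab ⟨h.1.1, h.1.2.1⟩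

/-- Both bases are positive and shorter than twice the leg. -/
def Admissible (t : ℝ × ℝ × ℝ) : Prop :=
  0 < t.2.1 ∧ t.2.1 < 2 * t.1 ∧ 0 < t.2.2 ∧ t.2.2 < 2 * t.1

instance countable_poly (R : Type*) [Semiring R] [Countable R] : Countable R[X] :=
  Function.Injective.countable
    (f := fun p : R[X] => (⟨p.support, p.coeff, fun n => by simp⟩ : ℕ →₀ R)) fun p q h => by
      ext n
      exact DFunLike.congr_fun h n

theorem ae_generic : ∀ᵐ t : ℝ × ℝ × ℝ, Admissible t → Generic (apexPair t) := by
  have h : ∀ᵐ t : ℝ × ℝ × ℝ, ∀ p : ℤ[X][X], p ≠ 0 →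
      ¬ (Admissible t ∧ evalPair (apexPair t) p = 0) := by
    rw [ae_all_iff]
    intro p
    by_cases hp : p = 0
    · exact Filter.Eventually.of_forall fun t h => absurd hp h
    · filter_upwards [measure_eq_zero_iff_ae_notMem.1 (volume_zeros p hp)] with t ht _
      exact ht
  filter_upwards [h] with t ht hadm
  refine (injective_iff_map_eq_zero _).2 fun p hp => ?_
  by_contra hne
  exact ht p hne ⟨hadm, hp⟩

/-- For a generic triple whose first entry can serve as the leg, every Δ-tree has a drawing. -/
lemma exists_scaled_drawing {t : ℝ × ℝ × ℝ} (ht : Admissible t) (hg : Generic (apexPair t))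
    {V : Finset ℕ} {E : Finset (Sym2 ℕ)} (h : IsDeltaTree V E) :
    ∃ f : ℕ → ℂ, Set.InjOn f ↑V ∧ ∀ e ∈ E, edgeLength f e ∈ ({t.1, t.2.1, t.2.2} : Set ℝ) := by
  obtain ⟨ext, h⟩ := h
  obtain ⟨f, U, hf⟩ := exists_drawing hg (fun i => norm_apex _) h
  obtain ⟨hb, hba, hd, hda⟩ := ht
  have ha : 0 < t.1 := by linarith
  have ha2 : 0 < 2 * t.1 := by linarith
  refine ⟨fun n => t.1 * f n, ?_, ?_⟩
  · intro i hi j hj hij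
    exact hf.injOn hi hj (mul_left_cancel₀ (Complex.ofReal_ne_zero.2 ha.ne') hij)
  · intro e
    induction e using Sym2.ind with
    | _ u w =>
      intro he
      have hl := (hf.length_mem u w he).2.2
      have hs : edgeLength (fun n => (t.1 : ℂ) * f n) s(u, w) = t.1 * dist (f u) (f w) := by
        simp only [edgeLength, Sym2.lift_mk]
        rw [dist_eq_norm, ← mul_sub, norm_mul, Complex.norm_real, Real.norm_eq_abs,
          abs_of_pos ha, dist_eq_norm]
      rw [hs]
      have e1 : ‖1 - apexPair t false‖ = 2 * (t.2.1 / (2 * t.1)) := by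
        simpa [apexPair] using
          norm_one_sub_apex (div_nonneg hb.le ha2.le) ((div_le_one ha2).2 hba.le)
      have e2 : ‖1 - apexPair t true‖ = 2 * (t.2.2 / (2 * t.1)) := by
        simpa [apexPair] using
          norm_one_sub_apex (div_nonneg hd.le ha2.le) ((div_le_one ha2).2 hda.le)
      rcases hl with hl | hl | hl
      · rw [hl, mul_one]; simp
      · rw [hl, e1]
        right; left; field_simp
      · rw [Set.mem_singleton_iff.1 hl, e2]
        right; right; rw [Set.mem_singleton_iff]; field_simp

/-- The cyclic shift of the three lengths. -/
def rotate (t : ℝ × ℝ × ℝ) : ℝ × ℝ × ℝ := (t.2.1, t.2.2, t.1)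

lemma measurePreserving_rotate : MeasurePreserving rotate := by
  have h1 : MeasurePreserving (Prod.swap : ℝ × ℝ × ℝ → (ℝ × ℝ) × ℝ) :=
    Measure.measurePreserving_swap
  exact (measurePreserving_prodAssoc (volume : Measure ℝ) (volume : Measure ℝ)
    (volume : Measure ℝ)).comp h1

/-- For almost every triple `(a,b,c) ∈ (0,1)³` (w.r.t. Lebesgue measure on ℝ³), every
subgraph of every Δ-tree admits a degenerate drawing all of whose edge-lengths lie in
`{a, b, c}`: the set of exceptional triples has measure zero. -/
theorem ae_triple_subgraph_of_deltaTree_drawing :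
    MeasureTheory.volume
      {t : ℝ × ℝ × ℝ |
        t.1 ∈ Set.Ioo (0 : ℝ) 1 ∧ t.2.1 ∈ Set.Ioo (0 : ℝ) 1 ∧ t.2.2 ∈ Set.Ioo (0 : ℝ) 1 ∧
        ∃ (V : Finset ℕ) (E : Finset (Sym2 ℕ)) (V' : Finset ℕ) (E' : Finset (Sym2 ℕ)),
          IsDeltaTree V E ∧ V' ⊆ V ∧ E' ⊆ E ∧ (∀ e ∈ E', ∀ v ∈ e, v ∈ V') ∧
          ¬ ∃ f : ℕ → ℂ, Set.InjOn f ↑V' ∧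
              ∀ e ∈ E', edgeLength f e ∈ ({t.1, t.2.1, t.2.2} : Set ℝ)} = 0 := by
  have h0 := ae_generic
  have h1 := measurePreserving_rotate.quasiMeasurePreserving.ae h0
  have h2 := measurePreserving_rotate.quasiMeasurePreserving.ae h1
  rw [measure_eq_zero_iff_ae_notMem]
  filter_upwards [h0, h1, h2] with t g0 g1 g2
  rintro ⟨⟨ha, -⟩, ⟨hb, -⟩, ⟨hd, -⟩, V, E, V', E', hT, hV, hE, -, hno⟩
  apply hno
  suffices h : ∃ f : ℕ → ℂ, Set.InjOn f ↑V ∧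
      ∀ e ∈ E, edgeLength f e ∈ ({t.1, t.2.1, t.2.2} : Set ℝ) by
    obtain ⟨f, hf, hl⟩ := h
    exact ⟨f, hf.mono (Finset.coe_subset.2 hV), fun e he => hl e (hE he)⟩
  -- A largest entry can serve as the leg; rotate it to the front.
  by_cases c0 : t.2.1 ≤ t.1 ∧ t.2.2 ≤ t.1
  · have had : Admissible t := ⟨hb, by linarith [c0.1], hd, by linarith [c0.2]⟩
    exact exists_scaled_drawing had (g0 had) hT
  by_cases c1 : t.2.2 ≤ t.2.1 ∧ t.1 ≤ t.2.1
  · have had : Admissible (rotate t) := by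
      refine ⟨hd, ?_, ha, ?_⟩ <;> simp only [rotate] <;> linarith [c1.1, c1.2]
    obtain ⟨f, hf, hl⟩ := exists_scaled_drawing had (g1 had) hT
    refine ⟨f, hf, fun e he => ?_⟩
    have := hl e he
    simp only [rotate, Set.mem_insert_iff, Set.mem_singleton_iff] at this ⊢
    tauto
  · have hmax : t.1 ≤ t.2.2 ∧ t.2.1 ≤ t.2.2 := by
      by_contra hcon
      rcases le_total t.1 t.2.1 with h | h <;> rcases le_total t.2.1 t.2.2 with h' | h' <;>
        rcases le_total t.1 t.2.2 with h'' | h'' <;>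
        first
        | exact c0 ⟨by linarith, by linarith⟩
        | exact c1 ⟨by linarith, by linarith⟩
        | exact hcon ⟨by linarith, by linarith⟩
    have had : Admissible (rotate (rotate t)) := by
      refine ⟨ha, ?_, hb, ?_⟩ <;> simp only [rotate] <;> linarith [hmax.1, hmax.2]
    obtain ⟨f, hf, hl⟩ := exists_scaled_drawing had (g2 had) hT
    refine ⟨f, hf, fun e he => ?_⟩
    have := hl e he
    simp only [rotate, Set.mem_insert_iff, Set.mem_singleton_iff] at this ⊢
    tauto
end

section
/- Let d ≥ 1 and let p ∈ ℂ[x₁,…,x_d] be a nonzero polynomial. Then the set {θ ∈ ℝ^d : p(exp(2πiθ₁), …, exp(2πiθ_d)) = 0} has Lebesgue measure zero. Consequently, if p and q are two distinct polynomials in ℂ[x₁,…,x_d], then the set of θ ∈ ℝ^d at which p and q take the same value on the corresponding torus point has Lebesgue measure zero. -/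
/-!
The zero set is shown to be null by induction on the number of variables and Fubini. Viewing a
nonzero polynomial in `n + 1` variables as a polynomial in the first variable whose coefficients
are polynomials in the other `n`, its leading coefficient is nonzero at almost every point of the
`n`-torus by induction. For each such point the specialised one-variable polynomial is nonzero, so
it has finitely many roots; their preimage is countable, hence null, under
`t ↦ exp (2πit)` (`countable_zeros_on_circle`). The statement on two polynomials is the first
one applied to their difference.
-/

open MeasureTheory

/-- A nonzero one-variable polynomial has countably many zeros `t` on the circle parametrized by
the whole real line. -/
theorem countable_zeros_on_circle (f : Polynomial ℂ) (hf : f ≠ 0) :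
    {t : ℝ | f.eval (Complex.exp (2 * Real.pi * Complex.I * t)) = 0}.Countable := by
  have hroots : {z : ℂ | f.eval z = 0}.Countable := by
    refine (f.roots.toFinset.countable_toSet).mono fun z hz => ?_
    simpa [hf] using hz
  have hinj : Function.Injective fun t : ℝ => 2 * Real.pi * Complex.I * (t : ℂ) := by
    intro s t hst
    have hc : (2 * Real.pi * Complex.I : ℂ) ≠ 0 := Complex.two_pi_I_ne_zero
    exact Complex.ofReal_injective (mul_left_cancel₀ hc hst)
  exact (Set.Countable.preimage_cexp hroots).preimage_of_injOn hinj.injOn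

theorem volume_zeros_on_torus (n : ℕ) (p : MvPolynomial (Fin n) ℂ) (hp : p ≠ 0) :
    volume {θ : Fin n → ℝ |
      MvPolynomial.eval
        (fun i : Fin n => Complex.exp (2 * Real.pi * Complex.I * (θ i))) p = 0} = 0 := by
  induction n with
  | zero =>
    -- In no variables, `p` is a nonzero constant and the zero set is empty.
    convert measure_empty (μ := (volume : Measure (Fin 0 → ℝ)))
    refine Set.eq_empty_of_forall_notMem fun θ hθ => hp ?_
    rw [Set.mem_ofPred_eq, MvPolynomial.eq_C_of_isEmpty p, MvPolynomial.eval_C] at hθ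
    rw [MvPolynomial.eq_C_of_isEmpty p, hθ, map_zero]
  | succ n ih =>
    set F := MvPolynomial.finSuccEquiv ℂ n p with hF
    have hF0 : F ≠ 0 := by simpa [hF] using hp
    -- The zero set, read in the coordinates `ℝ × ℝⁿ`.
    set S : Set (ℝ × (Fin n → ℝ)) := {x |
      MvPolynomial.eval (Fin.cons (Complex.exp (2 * Real.pi * Complex.I * x.1))
        (fun i => Complex.exp (2 * Real.pi * Complex.I * (x.2 i))) : Fin (n + 1) → ℂ) p = 0}
      with hS
    have hSm : MeasurableSet S := by
      refine (isClosed_singleton.preimage (?_ : Continuous _)).measurableSet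
      refine (MvPolynomial.continuous_eval p).comp (continuous_pi fun i => ?_)
      refine Fin.cases ?_ (fun j => ?_) i
      · simp only [Fin.cons_zero]; fun_prop
      · simp only [Fin.cons_succ]; fun_prop
    have hS0 : volume S = 0 := by
      rw [Measure.volume_eq_prod, Measure.prod_apply_symm hSm,
        lintegral_eq_zero_iff (measurable_measure_prodMk_right hSm)]
      have hae := ih F.leadingCoeff (Polynomial.leadingCoeff_ne_zero.mpr hF0)
      rw [measure_eq_zero_iff_ae_notMem] at hae
      filter_upwards [hae] with y hy
      refine Set.Countable.measure_zero ?_ _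
      refine (countable_zeros_on_circle (F.map (MvPolynomial.eval
        fun i => Complex.exp (2 * Real.pi * Complex.I * (y i)))) fun h0 => hy ?_).mono ?_
      · have := congrArg (fun g => g.coeff F.natDegree) h0
        simpa [Polynomial.coeff_map] using this
      · intro t ht
        simpa [hS, hF, MvPolynomial.eval_eq_eval_mv_eval'] using ht
    have hpre := (volume_preserving_piFinSuccAbove (fun _ : Fin (n + 1) => ℝ) 0).measure_preimage
      hSm.nullMeasurableSet
    rw [hS0] at hpre
    convert hpre using 2
    ext θ
    have hcons : (fun i : Fin (n + 1) => Complex.exp (2 * Real.pi * Complex.I * (θ i))) =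
        Fin.cons (Complex.exp (2 * Real.pi * Complex.I * (θ 0)))
          (fun i : Fin n => Complex.exp (2 * Real.pi * Complex.I * (θ i.succ))) := by
      funext i
      refine Fin.cases ?_ (fun j => ?_) i <;> simp
    rw [Set.mem_ofPred_eq, hcons]
    rfl


/-- Let `d ≥ 1` and let `p ∈ ℂ[x₁,…,x_d]` be a nonzero polynomial.  Then the set of
`θ ∈ ℝ^d` at which `p` vanishes on the corresponding torus point
`(exp(2πiθ₁), …, exp(2πiθ_d))` has Lebesgue measure zero.  Consequently, two distinct
polynomials agree on the torus points corresponding to a measure-zero set of `θ` only. -/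
theorem ae_nonvanishing_on_torus (d : ℕ) (hd : 1 ≤ d) :
    (∀ p : MvPolynomial (Fin d) ℂ, p ≠ 0 →
      MeasureTheory.volume
        {θ : Fin d → ℝ |
          MvPolynomial.eval
            (fun i : Fin d => Complex.exp (2 * Real.pi * Complex.I * (θ i))) p = 0} = 0) ∧
    (∀ p q : MvPolynomial (Fin d) ℂ, p ≠ q →
      MeasureTheory.volume
        {θ : Fin d → ℝ |
          MvPolynomial.eval
            (fun i : Fin d => Complex.exp (2 * Real.pi * Complex.I * (θ i))) p =
          MvPolynomial.eval
            (fun i : Fin d => Complex.exp (2 * Real.pi * Complex.I * (θ i))) q} = 0) := by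
  refine ⟨fun p hp => volume_zeros_on_torus d p hp, fun p q hpq => ?_⟩
  simpa [sub_eq_zero] using volume_zeros_on_torus d (p - q) (sub_ne_zero.mpr hpq)
end

section
/- Let a, b ∈ ℂ be distinct points, let n ≥ 1, and let p : {1,…,n} → ℂ be an injective map with p(i) ∉ {a, b} for all i. Let D = {|p(i) − a| : 1 ≤ i ≤ n} ∪ {|p(i) − b| : 1 ≤ i ≤ n} be the set of distances from the points p(i) to a and to b, and let k = |D|. Then n ≤ 2k². In particular, every degenerate drawing of the complete bipartite graph K_{2,n} uses at least √(n/2) distinct edge-lengths. -/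
/-!
The map sending `i` to the pair of distances from `p i` to `a` and to `b` takes values in
`D × D`, where `D` is the set of all distances that occur. Each of its fibres has at most two
elements, since two circles with distinct centres meet in at most two points
(`EuclideanGeometry.eq_of_dist_eq_of_dist_eq_of_finrank_eq_two`). Hence `n ≤ 2 * |D| ^ 2`.
-/

/-- Lower bound for the degenerate distance number of `K_{2,n}`: if `a ≠ b` are points
of ℂ and `p : Fin n → ℂ` (`n ≥ 1`) is injective avoiding `a` and `b`, and `k` is the
number of distinct distances from the points `p i` to `a` or to `b`, then `n ≤ 2k²`.
In particular any degenerate drawing of `K_{2,n}` uses at least `√(n/2)` distinct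
edge-lengths. -/
theorem K2n_degenerate_distance_lower_bound
    (a b : ℂ) (hab : a ≠ b) (n : ℕ) (hn : 1 ≤ n)
    (p : Fin n → ℂ) (hp : Function.Injective p)
    (ha : ∀ i, p i ≠ a) (hb : ∀ i, p i ≠ b) :
    n ≤ 2 * ((Finset.univ.image fun i : Fin n => dist (p i) a) ∪
             (Finset.univ.image fun i : Fin n => dist (p i) b)).card ^ 2 := by
  set D : Finset ℝ := (Finset.univ.image fun i : Fin n => dist (p i) a) ∪
    (Finset.univ.image fun i : Fin n => dist (p i) b) with hD
  have hmaps : ∀ i ∈ (Finset.univ : Finset (Fin n)),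
      (dist (p i) a, dist (p i) b) ∈ D ×ˢ D := fun i _ =>
    Finset.mem_product.2
      ⟨Finset.mem_union_left _ (Finset.mem_image_of_mem _ (Finset.mem_univ i)),
        Finset.mem_union_right _ (Finset.mem_image_of_mem _ (Finset.mem_univ i))⟩
  have hcard := Finset.card_le_mul_card_image_of_maps_to hmaps 2 (by
    rintro ⟨r, s⟩ -
    by_contra! h
    obtain ⟨i, j, k, hi, hj, hk, hij, hik, hjk⟩ := Finset.two_lt_card_iff.1 h
    simp only [Finset.mem_filter, Finset.mem_univ, true_and, Prod.mk.injEq] at hi hj hk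
    rcases EuclideanGeometry.eq_of_dist_eq_of_dist_eq_of_finrank_eq_two
      Complex.finrank_real_complex hab (hp.ne hij) hi.1 hj.1 hk.1 hi.2 hj.2 hk.2 with e | e
    · exact hik (hp e).symm
    · exact hjk (hp e).symm)
  rwa [Finset.card_univ, Fintype.card_fin, Finset.card_product, ← sq] at hcard
end

section
/- For every n ≥ 1 there exist distinct points a, b ∈ ℂ and an injective map p : {1,…,n} → ℂ with p(i) ∉ {a, b} for all i, such that the set of distances D = {|p(i) − a| : 1 ≤ i ≤ n} ∪ {|p(i) − b| : 1 ≤ i ≤ n} has cardinality at most 2·⌈√n⌉. In particular, the complete bipartite graph K_{2,n} admits a degenerate drawing using at most 2·⌈√n⌉ distinct edge-lengths. -/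
/-!
Put `m = ⌈√n⌉`, so that `n ≤ m * m`, and take `a = -1`, `b = 1`. The circles around `-1` and `1` with
squared radii in `[2, 3]` always intersect (`exists_dist_eq_sqrt`), so the `m` squared radii
`2 + k / m`, `k < m`, used around both centres give an `m × m` grid of intersection points, which
are distinct because a point determines its pair of distances. Writing `i < n` as `(i / m, i % m)`
places the `n` points on this grid.
-/

/-- Circles around `-1` and `1` with squared radii `s, t ∈ [2, 3]` intersect. -/
lemma exists_dist_eq_sqrt (s t : ℝ) (hs : 2 ≤ s) (hs' : s ≤ 3) (ht : 2 ≤ t) (ht' : t ≤ 3) :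
    ∃ z : ℂ, dist z (-1) = √s ∧ dist z 1 = √t := by
  -- Subtracting `(x + 1) ^ 2 + y ^ 2 = s` and `(x - 1) ^ 2 + y ^ 2 = t` gives `4 * x = s - t`.
  have hy : 0 ≤ s - ((s - t) / 4 + 1) ^ 2 := by
    nlinarith
  refine ⟨⟨(s - t) / 4, √(s - ((s - t) / 4 + 1) ^ 2)⟩, ?_, ?_⟩
  · rw [Complex.dist_eq_re_im]
    congr 1
    simp only [Complex.neg_re, Complex.neg_im, Complex.one_re, Complex.one_im, neg_zero, sub_zero,
      Real.sq_sqrt hy]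
    ring
  · rw [Complex.dist_eq_re_im]
    congr 1
    simp only [Complex.one_re, Complex.one_im, sub_zero, Real.sq_sqrt hy]
    ring

/-- Upper bound for the degenerate distance number of `K_{2,n}`: for every `n ≥ 1`
there exist distinct points `a, b ∈ ℂ` and an injective map `p : Fin n → ℂ` avoiding
`a` and `b` such that the set of distances from the points `p i` to `a` or to `b` has
cardinality at most `2⌈√n⌉`.  In particular `K_{2,n}` admits a degenerate drawing with
at most `2⌈√n⌉` distinct edge-lengths. -/
theorem K2n_degenerate_distance_upper_bound (n : ℕ) (hn : 1 ≤ n) :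
    ∃ (a b : ℂ) (p : Fin n → ℂ), a ≠ b ∧ Function.Injective p ∧
      (∀ i, p i ≠ a ∧ p i ≠ b) ∧
      ((Finset.univ.image fun i : Fin n => dist (p i) a) ∪
       (Finset.univ.image fun i : Fin n => dist (p i) b)).card ≤
        2 * ⌈Real.sqrt n⌉₊ := by
  classical
  set m := ⌈Real.sqrt n⌉₊ with hm
  have hnm : n ≤ m * m := by
    have h : (n : ℝ) ≤ m * m := by
      rw [← Real.mul_self_sqrt (Nat.cast_nonneg n)]
      have := Nat.le_ceil (Real.sqrt n)
      gcongr
    exact_mod_cast h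
  have hm0 : 0 < m := by
    rcases Nat.eq_zero_or_pos m with h | h
    · simp [h] at hnm
      omega
    · exact h
  have hmR : (0 : ℝ) < m := by exact_mod_cast hm0
  let q : ℕ → ℝ := fun k => 2 + k / m
  have hq2 (k : ℕ) : 2 ≤ q k := by
    have : (0 : ℝ) ≤ k / m := by positivity
    simp only [q]
    linarith
  have hq3 (k : ℕ) (hk : k < m) : q k ≤ 3 := by
    have : (k : ℝ) / m ≤ 1 := by
      rw [div_le_one hmR]
      exact_mod_cast hk.le
    simp only [q]
    linarith
  have hinj (k l : ℕ) (h : √(q k) = √(q l)) : k = l := by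
    rw [Real.sqrt_inj (by linarith [hq2 k]) (by linarith [hq2 l])] at h
    simp only [q, add_right_inj] at h
    rw [div_left_inj' hmR.ne'] at h
    exact_mod_cast h
  have hdiv (i : Fin n) : (i : ℕ) / m < m :=
    Nat.div_lt_of_lt_mul (i.isLt.trans_le hnm)
  have hmod (i : Fin n) : (i : ℕ) % m < m := Nat.mod_lt _ hm0
  choose p hpa hpb using fun i : Fin n =>
    exists_dist_eq_sqrt (q (i / m)) (q (i % m)) (hq2 _) (hq3 _ (hdiv i)) (hq2 _) (hq3 _ (hmod i))
  have hpos (k : ℕ) : 0 < √(q k) := Real.sqrt_pos.2 (by linarith [hq2 k])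
  refine ⟨-1, 1, p, by norm_num, ?_, ?_, ?_⟩
  · intro i j hij
    have h1 : (i : ℕ) / m = j / m := hinj _ _ (by rw [← hpa, ← hpa, hij])
    have h2 : (i : ℕ) % m = j % m := hinj _ _ (by rw [← hpb, ← hpb, hij])
    apply Fin.ext
    rw [← Nat.div_add_mod (i : ℕ) m, ← Nat.div_add_mod (j : ℕ) m, h1, h2]
  · intro i
    refine ⟨dist_pos.1 ?_, dist_pos.1 ?_⟩
    · rw [hpa]
      exact hpos _
    · rw [hpb]
      exact hpos _
  · -- Both centres use the same radii, so even `m` distances suffice.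
    calc _ ≤ ((Finset.range m).image fun k => √(q k)).card := by
          apply Finset.card_le_card
          apply Finset.union_subset <;> apply Finset.image_subset_iff.2 <;> intro i _
          · rw [hpa]
            exact Finset.mem_image_of_mem (fun k => √(q k)) (Finset.mem_range.2 (hdiv i))
          · rw [hpb]
            exact Finset.mem_image_of_mem (fun k => √(q k)) (Finset.mem_range.2 (hmod i))
      _ ≤ m := by simpa using Finset.card_image_le (s := Finset.range m) (f := fun k => √(q k))
      _ ≤ 2 * m := by omega
end
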